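/- arXiv:1703.02848 — 2 statements merged into one kernel-verified Lean document; each statement's English description precedes it below -/
import Mathlib

section
/- Let n = 56 and let x, y ∈ S_56 be the permutations given in the context, with z = (x·y)⁻¹. Then (x, y, z) is a nice triple; the cycle types of x, y, z are 4^12·2^2, 8^6·4^1·2^2 and 2^25 respectively; and the subgroup ⟨x, y⟩ of S_56 has cardinality 80640 (the order of the normalizer of PSL(3,4) in S_56, which is PSL(3,4):2^2). -/
/-- `permInd s` = (sum of the cycle type of `s`) − (number of entries of the cycle type of `s`),
i.e. `n` minus the number of cycles of `s` when fixed points are counted as cycles. -/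
def permInd {n : ℕ} (s : Equiv.Perm (Fin n)) : ℕ :=
  s.cycleType.sum - Multiset.card s.cycleType

/-- A `MulAction` is preprimitive if it is pretransitive and every block is trivial. -/
def IsPreprimitive (G : Type*) (X : Type*) [Group G] [MulAction G X] : Prop :=
  MulAction.IsPretransitive G X ∧
    ∀ B : Set X, MulAction.IsBlock G B → MulAction.IsTrivialBlock B

/-- A triple `(x, y, z)` of permutations in `S_n` is *nice*:
(i) `x * y * z = 1`; (ii) `G = ⟨x, y⟩` is neither the alternating nor the symmetric group;
(iii) `G` acts primitively on `Fin n` and is almost simple; (iv) the triple has genus 0;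
(v) the triple is rigid in `G`; (vi) `x`, `y`, `z` lie in rational conjugacy classes of `G`. -/
def IsNice {n : ℕ} (x y z : Equiv.Perm (Fin n)) : Prop :=
  x * y * z = 1 ∧
  (Subgroup.closure {x, y} ≠ alternatingGroup (Fin n) ∧
    Subgroup.closure {x, y} ≠ ⊤) ∧
  IsPreprimitive (Subgroup.closure {x, y}) (Fin n) ∧
  (∃ S : Subgroup (Subgroup.closure {x, y}), S.Normal ∧ IsSimpleGroup S ∧
    (∃ a b : S, a * b ≠ b * a) ∧
    Subgroup.centralizer (S : Set (Subgroup.closure {x, y})) = ⊥) ∧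
  permInd x + permInd y + permInd z = 2 * (n - 1) ∧
  (∀ x' y' z' : Equiv.Perm (Fin n),
    x' * y' * z' = 1 →
    Subgroup.closure {x', y'} = Subgroup.closure {x, y} →
    (∃ g ∈ Subgroup.closure {x, y}, g * x * g⁻¹ = x') →
    (∃ g ∈ Subgroup.closure {x, y}, g * y * g⁻¹ = y') →
    (∃ g ∈ Subgroup.closure {x, y}, g * z * g⁻¹ = z') →
    ∃ g ∈ Subgroup.closure {x, y},
      g * x * g⁻¹ = x' ∧ g * y * g⁻¹ = y' ∧ g * z * g⁻¹ = z') ∧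
  ∀ g ∈ ({x, y, z} : Set (Equiv.Perm (Fin n))), ∀ k : ℤ,
    Int.gcd k (orderOf g) = 1 →
    ∃ h ∈ Subgroup.closure {x, y}, h * g * h⁻¹ = g ^ k

/-- The permutation given by a list of (disjoint) cycles, each written as a list of points. -/
def permOfCycles {n : ℕ} (cs : List (List (Fin n))) : Equiv.Perm (Fin n) :=
  (cs.map List.formPerm).prod

def x : Equiv.Perm (Fin 56) := permOfCycles [
  [1, 36, 2, 5],
  [3, 47],
  [7, 45, 33, 22],
  [8, 31, 55, 14],
  [9, 21, 50, 48],
  [10, 16, 40, 39],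
  [11, 54],
  [12, 19, 49, 23],
  [13, 41, 42, 15],
  [17, 56, 24, 30],
  [18, 53, 44, 25],
  [20, 52, 28, 35],
  [26, 29, 46, 37],
  [27, 34, 51, 43]]

def y : Equiv.Perm (Fin 56) := permOfCycles [
  [1, 27, 36, 32],
  [2, 43, 50, 14, 52, 17, 30, 54],
  [3, 38, 47, 29, 33, 53, 16, 46],
  [4, 7, 22, 26, 28, 55, 44, 45],
  [5, 11, 24, 56, 20, 12, 41, 34],
  [6, 40, 18, 19, 35, 37, 10, 39],
  [8, 21],
  [9, 48, 51, 13, 15, 49, 25, 31],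
  [23, 42]]

/-!
Let `G = ⟨x, y⟩` and `z = (x * y)⁻¹`.

* The order of `G` is computed by the Schreier–Sims method.
* Two elements of order `7` in `G` generate a subgroup whose point stabilizer has orbits of lengths
  `1`, `10`, `45`. As the sizes of blocks divide `56`, this subgroup is primitive, and so is every
  group between it and `G`.
* Let `S` be generated by all elements of order `7`. A nontrivial normal subgroup `N` of a primitive
  group is transitive, so `7` divides `|N|`; as `49` does not divide `|G|`, the index of `N` is
  prime to `7` and `N` contains all elements of order `7`. Hence `S` is simple. Its centralizer in
  `G` is trivial, as it would otherwise contain `S`, which is not abelian.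
* For rigidity, let `(x', y', z')` be another triple. After a conjugation `y' = y`, and then `z'` is
  one of the `336` conjugates `w` of `z`. Either `(y * w) ^ 4 ≠ 1`, so that `(y * w)⁻¹` is not
  conjugate to `x`, or `⟨y, w⟩` preserves a cycle of `y` and is not transitive, or `w` is conjugate
  to `z` by an element that commutes with `y`.
-/

open Equiv

namespace NiceTriple

section Codes

variable {n : ℕ}

/-- The code of a permutation `g` of `Fin n` is the number whose `i`-th digit in base `n` is `g i`.
Computing with codes instead of permutations makes every finite check below an evaluation of
arithmetic on numerals, which the kernel does with big-number arithmetic. -/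
def code (g : Perm (Fin n)) : ℕ := finFunctionFinEquiv g

theorem code_injective : Function.Injective (code : Perm (Fin n) → ℕ) :=
  Fin.val_injective.comp (finFunctionFinEquiv.injective.comp DFunLike.coe_injective)

/-- The `i`-th digit of `c` in base `n`: if `c` is the code of a permutation, its value at `i`. -/
def digit (n c i : ℕ) : ℕ := c / n ^ i % n

theorem digit_code (g : Perm (Fin n)) (i : Fin n) : digit n (code g) i = g i :=
  congrArg Fin.val (congrFun (finFunctionFinEquiv.symm_apply_apply g) i)

/-- The sum `∑ i < k, v i * n ^ e i`, which is the number with digit `v i` at position `e i`. It is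
defined by structural recursion because the kernel evaluates this faster than a `Finset.sum`. -/
def packDigits (n : ℕ) (e v : ℕ → ℕ) : ℕ → ℕ
  | 0 => 0
  | k + 1 => packDigits n e v k + v k * n ^ e k

theorem packDigits_eq_sum (e v : ℕ → ℕ) (k : ℕ) :
    packDigits n e v k = ∑ i ∈ Finset.range k, v i * n ^ e i := by
  induction k with
  | zero => rfl
  | succ k ih => rw [packDigits, ih, Finset.sum_range_succ]

theorem code_eq_packDigits (g σ : Perm (Fin n)) {e v : ℕ → ℕ} (he : ∀ i : Fin n, e i = σ i)
    (hv : ∀ i : Fin n, v i = g (σ i)) : code g = packDigits n e v n := by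
  rw [packDigits_eq_sum, ← Fin.sum_univ_eq_sum_range (fun i => v i * n ^ e i), code,
    finFunctionFinEquiv_apply, ← Equiv.sum_comp σ]
  simp only [he, hv]

/-- The code of the identity. -/
def oneCode (n : ℕ) : ℕ := packDigits n id id n

/-- The code of the product of two permutations in terms of their codes. -/
def mulCode (n a b : ℕ) : ℕ := packDigits n id (fun i => digit n a (digit n b i)) n

/-- The code of the inverse of a permutation in terms of its code. -/
def invCode (n a : ℕ) : ℕ := packDigits n (digit n a) id n

/-- The code of `g * h * g⁻¹` in terms of the codes `a` of `g` and `b` of `h`. -/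
def conjCode (n a b : ℕ) : ℕ := packDigits n (digit n a) (fun i => digit n a (digit n b i)) n

/-- The code of the product of a list of permutations in terms of their codes. -/
def prodCode (n : ℕ) (l : List ℕ) : ℕ := l.foldr (mulCode n) (oneCode n)

theorem code_one : code (1 : Perm (Fin n)) = oneCode n :=
  code_eq_packDigits 1 1 (fun _ => rfl) fun _ => rfl

theorem code_mul (g h : Perm (Fin n)) : code (g * h) = mulCode n (code g) (code h) :=
  code_eq_packDigits (g * h) 1 (fun _ => rfl) fun i => by simp [digit_code]

theorem code_inv (g : Perm (Fin n)) : code g⁻¹ = invCode n (code g) :=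
  code_eq_packDigits g⁻¹ g (fun i => digit_code g i) fun i => by simp

theorem code_conj (g h : Perm (Fin n)) : code (g * h * g⁻¹) = conjCode n (code g) (code h) :=
  code_eq_packDigits (g * h * g⁻¹) g (fun i => digit_code g i) fun i => by simp [digit_code]

theorem code_list_prod (l : List (Perm (Fin n))) : code l.prod = prodCode n (l.map code) := by
  induction l with
  | nil => exact code_one
  | cons g l ih => rw [List.prod_cons, code_mul, ih]; rfl

theorem code_pow (g : Perm (Fin n)) (k : ℕ) :
    code (g ^ k) = prodCode n (List.replicate k (code g)) := by
  rw [← List.prod_replicate, code_list_prod, List.map_replicate]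

/-- The codes of the elements of a permutation group. -/
def codes (H : Subgroup (Perm (Fin n))) : Set ℕ := code '' (H : Set (Perm (Fin n)))

variable {H : Subgroup (Perm (Fin n))}

theorem code_mem_codes {g : Perm (Fin n)} : code g ∈ codes H ↔ g ∈ H :=
  code_injective.mem_set_image

theorem oneCode_mem_codes : oneCode n ∈ codes H := ⟨1, H.one_mem, code_one⟩

theorem mulCode_mem_codes {a b : ℕ} (ha : a ∈ codes H) (hb : b ∈ codes H) :
    mulCode n a b ∈ codes H := by
  obtain ⟨g, hg, rfl⟩ := ha
  obtain ⟨h, hh, rfl⟩ := hb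
  exact ⟨g * h, H.mul_mem hg hh, code_mul g h⟩

theorem prodCode_mem_codes {l : List ℕ} (hl : ∀ c ∈ l, c ∈ codes H) : prodCode n l ∈ codes H := by
  induction l with
  | nil => exact oneCode_mem_codes
  | cons c l ih =>
    rw [List.forall_mem_cons] at hl
    exact mulCode_mem_codes hl.1 (ih hl.2)

/-- The code of the word `g ^ i₁ * h ^ j₁ * g ^ i₂ * h ^ j₂ * ⋯` in two permutations with codes `a`
and `b`, given by the list of its exponents `(i₁, j₁), (i₂, j₂), …`. -/
def wordCode (n a b : ℕ) (w : List (ℕ × ℕ)) : ℕ :=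
  prodCode n (w.flatMap fun e => List.replicate e.1 a ++ List.replicate e.2 b)

theorem wordCode_mem_codes {a b : ℕ} (ha : a ∈ codes H) (hb : b ∈ codes H) (w : List (ℕ × ℕ)) :
    wordCode n a b w ∈ codes H := by
  refine prodCode_mem_codes fun c hc => ?_
  obtain ⟨e, -, hc⟩ := List.mem_flatMap.1 hc
  rcases List.mem_append.1 hc with hc | hc
  · exact List.eq_of_mem_replicate hc ▸ ha
  · exact List.eq_of_mem_replicate hc ▸ hb

end Codes

section Search

/-- One step of a search: `c` is recorded as found, and put on the stack of elements to be expanded,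
unless an element with the same key has been found before. -/
def visit (key : ℕ → ℕ) (c : ℕ) : List ℕ × List ℕ → List ℕ × List ℕ
  | (stack, found) =>
    if key c ∈ found.map key then (stack, found) else (c :: stack, c :: found)

/-- Depth-first search along the functions `fs` from a state consisting of the stack and the list of
found elements; `fuel` bounds the number of expanded elements. -/
def searchFrom (fs : List (ℕ → ℕ)) (key : ℕ → ℕ) : (fuel : ℕ) → List ℕ × List ℕ → List ℕ
  | 0, (_, found) => found
  | _, ([], found) => found
  | fuel + 1, (c :: stack, found) =>
    searchFrom fs key fuel (fs.foldl (fun s f => visit key (f c) s) (stack, found))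

/-- Elements with pairwise different keys that are obtained from `c` by applying functions in `fs`,
at least one for each reachable key if `fuel` is large enough and keys are compatible with `fs`. -/
def search (fs : List (ℕ → ℕ)) (key : ℕ → ℕ) (fuel c : ℕ) : List ℕ :=
  searchFrom fs key fuel ([c], [c])

variable {P : ℕ → Prop} {fs : List (ℕ → ℕ)} {key : ℕ → ℕ}

theorem forall_mem_visit {c : ℕ} (hc : P c) {s : List ℕ × List ℕ} (hs : ∀ d ∈ s.1 ++ s.2, P d) :
    ∀ d ∈ (visit key c s).1 ++ (visit key c s).2, P d := by
  rw [visit]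
  split_ifs
  · exact hs
  · rw [List.forall_mem_append] at hs ⊢
    exact ⟨List.forall_mem_cons.2 ⟨hc, hs.1⟩, List.forall_mem_cons.2 ⟨hc, hs.2⟩⟩

theorem forall_mem_searchFrom (hfs : ∀ f ∈ fs, ∀ c, P c → P (f c)) {fuel : ℕ}
    {s : List ℕ × List ℕ} (hs : ∀ d ∈ s.1 ++ s.2, P d) :
    ∀ d ∈ searchFrom fs key fuel s, P d := by
  induction fuel, s using searchFrom.induct fs key with
  | case1 => exact (List.forall_mem_append.1 hs).2
  | case2 => simpa only [searchFrom, List.nil_append] using hs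
  | case3 fuel c stack found ih =>
    rw [searchFrom]
    obtain ⟨hc, hs⟩ := List.forall_mem_cons.1 hs
    exact ih (List.foldlRecOn (motive := fun s : List ℕ × List ℕ => ∀ d ∈ s.1 ++ s.2, P d) fs _ hs
      fun s hs f hf => forall_mem_visit (hfs f hf c hc) hs)

theorem forall_mem_search (hfs : ∀ f ∈ fs, ∀ c, P c → P (f c)) {fuel c : ℕ} (hc : P c) :
    ∀ d ∈ search fs key fuel c, P d :=
  forall_mem_searchFrom hfs (by simpa using hc)

end Search

section Generation

variable {G X : Type*} [Group G] [Finite G] {S : Set G}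

theorem closure_induction_mul_left {P : G → Prop} (one : P 1)
    (mul_left : ∀ s ∈ S, ∀ g, P g → P (s * g)) {g : G} (hg : g ∈ Subgroup.closure S) : P g := by
  rw [← Subgroup.mem_toSubmonoid, Subgroup.closure_toSubmonoid_of_finite] at hg
  induction hg using Submonoid.closure_induction_left with
  | one => exact one
  | mul_left s hs g _ ih => exact mul_left s hs g ih

variable [MulAction G X]

theorem smul_mem_of_mem_closure {B : Set X} (hS : ∀ s ∈ S, ∀ i ∈ B, s • i ∈ B) {g : G}
    (hg : g ∈ Subgroup.closure S) {i : X} (hi : i ∈ B) : g • i ∈ B :=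
  closure_induction_mul_left (P := fun g => g • i ∈ B) (by rwa [one_smul])
    (fun s hs g hg => mul_smul s g i ▸ hS s hs _ hg) hg

variable {K : Subgroup G} {b : X} {ι : Type*} {t : ι → G}

theorem exists_inv_mul_mem_of_mem_closure (hone : ∃ i, t i = 1)
    (hstep : ∀ s ∈ S, ∀ i, ∃ j, (t j)⁻¹ * (s * t i) ∈ K) {g : G} (hg : g ∈ Subgroup.closure S) :
    ∃ i, (t i)⁻¹ * g ∈ K := by
  refine closure_induction_mul_left (P := fun g => ∃ i, (t i)⁻¹ * g ∈ K) ?_ ?_ hg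
  · obtain ⟨i, hi⟩ := hone
    exact ⟨i, by simp [hi]⟩
  · rintro s hs g ⟨i, hi⟩
    obtain ⟨j, hj⟩ := hstep s hs i
    exact ⟨j, by simpa [mul_assoc] using K.mul_mem hj hi⟩

/-- Schreier's lemma in reverse: the `t i` represent all cosets of `K` as soon as multiplying by
generators does not lead out of their cosets, and `K` is then the whole stabilizer of `b`. -/
theorem card_closure_eq_mul_card (hK : K ≤ Subgroup.closure S) (hKb : ∀ k ∈ K, k • b = b)
    (ht : ∀ i, t i ∈ Subgroup.closure S) (hinj : Function.Injective fun i => t i • b)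
    (hone : ∃ i, t i = 1) (hstep : ∀ s ∈ S, ∀ i, ∃ j, (t j)⁻¹ * (s * t i) ∈ K) :
    Nat.card (Subgroup.closure S) = Nat.card ι * Nat.card K := by
  let f : ι × K → Subgroup.closure S := fun q => ⟨t q.1 * q.2, mul_mem (ht q.1) (hK q.2.2)⟩
  have f_injective : Function.Injective f := by
    rintro ⟨i, k⟩ ⟨j, l⟩ h
    have h : t i * k = t j * l := congrArg Subtype.val h
    obtain rfl : i = j := hinj <| calc
      t i • b = (t i * k) • b := by rw [mul_smul, hKb k k.2]
      _ = t j • b := by rw [h, mul_smul, hKb l l.2]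
    rw [Subtype.ext (mul_left_cancel h)]
  have f_surjective : Function.Surjective f := by
    rintro ⟨g, hg⟩
    obtain ⟨i, hi⟩ := exists_inv_mul_mem_of_mem_closure hone hstep hg
    exact ⟨(i, ⟨_, hi⟩), Subtype.ext (mul_inv_cancel_left _ _)⟩
  rw [← Nat.card_prod, Nat.card_congr (Equiv.ofBijective f ⟨f_injective, f_surjective⟩)]

end Generation

section StabilizerChain

variable {n : ℕ} {H : Subgroup (Perm (Fin n))} {S : List ℕ}

/-- The orbit of the point `b` under the permutations with codes in `S`. -/
def orbitList (n : ℕ) (S : List ℕ) (b : ℕ) : List ℕ := search (S.map (digit n)) id n b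

theorem exists_apply_eq_of_mem_orbitList (hS : ∀ s ∈ S, s ∈ codes H) {b i : Fin n}
    (hi : (i : ℕ) ∈ orbitList n S b) : ∃ g ∈ H, g b = i := by
  suffices ∃ g ∈ H, (g b : ℕ) = i by simpa only [Fin.val_inj] using this
  refine forall_mem_search (P := fun i => ∃ g ∈ H, (g b : ℕ) = i) ?_ ⟨1, H.one_mem, rfl⟩ i hi
  rintro _ hf _ ⟨g, hg, rfl⟩
  obtain ⟨c, hc, rfl⟩ := List.mem_map.1 hf
  obtain ⟨s, hs, rfl⟩ := hS c hc
  exact ⟨s * g, H.mul_mem hs hg, (digit_code s (g b)).symm⟩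

/-- Codes of elements of the group generated by the permutations with codes in `S`, one for each
point to which that group moves `b`. -/
def transversal (n : ℕ) (S : List ℕ) (b : ℕ) : List ℕ :=
  search (S.map (mulCode n)) (digit n · b) n (oneCode n)

theorem mem_codes_of_mem_transversal (hS : ∀ s ∈ S, s ∈ codes H) {b t : ℕ}
    (ht : t ∈ transversal n S b) : t ∈ codes H := by
  refine forall_mem_search (P := (· ∈ codes H)) ?_ oneCode_mem_codes t ht
  intro f hf c hc
  obtain ⟨s, hs, rfl⟩ := List.mem_map.1 hf
  exact mulCode_mem_codes (hS s hs) hc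

/-- The generators of the first group of a stabilizer chain. A chain of permutation groups, each
contained in the stabilizer of a point in the preceding one, is described by listing these points,
each with the codes of the generators that are in the group of this level but not in the next. -/
def chainGens (L : List (Fin n × List ℕ)) : List ℕ := L.flatMap Prod.snd

/-- The first group of a stabilizer chain. -/
def chainGroup (L : List (Fin n × List ℕ)) : Subgroup (Perm (Fin n)) :=
  Subgroup.closure {g | code g ∈ chainGens L}

/-- Whether the sifting procedure of Schreier and Sims writes the permutation with code `c` as a
product of elements of the transversals of the chain. -/
def sifts : List (Fin n × List ℕ) → ℕ → Bool
  | [], c => c = oneCode n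
  | (b, S) :: L, c => (transversal n (chainGens ((b, S) :: L)) b).any fun t =>
      digit n t b = digit n c b ∧ sifts L (mulCode n (invCode n t) c)

/-- The Schreier–Sims criterion for each group of the chain to be the full stabilizer of the point
of the preceding level in the preceding group, the last stabilizer being trivial. -/
def isStrong : List (Fin n × List ℕ) → Bool
  | [] => true
  | (b, S) :: L =>
    let gens := chainGens ((b, S) :: L)
    let T := transversal n gens b
    (∀ s ∈ chainGens L, digit n s b = b) ∧ oneCode n ∈ T ∧ (T.map (digit n · b)).Nodup ∧
      (∀ s ∈ gens, ∀ t ∈ T, sifts ((b, S) :: L) (mulCode n s t)) ∧ isStrong L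

/-- The product of the lengths of the transversals of a stabilizer chain. -/
def chainOrder : List (Fin n × List ℕ) → ℕ
  | [] => 1
  | (b, S) :: L => (transversal n (chainGens ((b, S) :: L)) b).length * chainOrder L

variable {b : Fin n} {L : List (Fin n × List ℕ)}

theorem mem_codes_chainGroup (hL : ∀ c ∈ chainGens L, c ∈ codes H) {c : ℕ}
    (hc : c ∈ chainGens L) : c ∈ codes (chainGroup L) := by
  obtain ⟨g, -, rfl⟩ := hL c hc
  exact code_mem_codes.2 (Subgroup.subset_closure hc)

theorem chainGroup_le_chainGroup_cons : chainGroup L ≤ chainGroup ((b, S) :: L) :=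
  Subgroup.closure_mono fun _ hg => List.mem_append_right S hg

theorem chainGroup_le_stabilizer (h : ∀ s ∈ chainGens L, digit n s b = b) :
    chainGroup L ≤ MulAction.stabilizer (Perm (Fin n)) b :=
  (Subgroup.closure_le _).2 fun g hg => Fin.ext ((digit_code g b).symm.trans (h _ hg))

theorem exists_sifts_of_sifts_cons (hL : ∀ c ∈ chainGens ((b, S) :: L), c ∈ codes H)
    {g : Perm (Fin n)} (hg : sifts ((b, S) :: L) (code g)) :
    ∃ τ ∈ chainGroup ((b, S) :: L), code τ ∈ transversal n (chainGens ((b, S) :: L)) b ∧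
      sifts L (code (τ⁻¹ * g)) := by
  simp only [sifts, List.any_eq_true, decide_eq_true_eq] at hg
  obtain ⟨t, ht, -, hsifts⟩ := hg
  obtain ⟨τ, hτ, rfl⟩ := mem_codes_of_mem_transversal (fun _ => mem_codes_chainGroup hL) ht
  exact ⟨τ, hτ, ht, by rwa [code_mul, code_inv]⟩

theorem mem_chainGroup_of_sifts (hL : ∀ c ∈ chainGens L, c ∈ codes H) {g : Perm (Fin n)}
    (hg : sifts L (code g)) : g ∈ chainGroup L := by
  induction L generalizing g with
  | nil =>
    obtain rfl : g = 1 := code_injective (by simpa [sifts, code_one] using hg)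
    exact one_mem _
  | cons l L ih =>
    obtain ⟨τ, hτ, -, hsifts⟩ := exists_sifts_of_sifts_cons hL hg
    have hres := ih (fun c hc => hL c (List.mem_append_right l.2 hc)) hsifts
    simpa using mul_mem hτ (chainGroup_le_chainGroup_cons hres)

theorem card_chainGroup_cons (hL : ∀ c ∈ chainGens ((b, S) :: L), c ∈ codes H)
    (h : isStrong ((b, S) :: L)) : Nat.card (chainGroup ((b, S) :: L)) =
      (transversal n (chainGens ((b, S) :: L)) b).length * Nat.card (chainGroup L) := by
  set T := transversal n (chainGens ((b, S) :: L)) b with hT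
  simp only [isStrong, decide_eq_true_eq, ← hT] at h
  obtain ⟨hfix, hone, hnodup, hsifts, -⟩ := h
  have hcodes (i : Fin T.length) : ∃ τ ∈ chainGroup ((b, S) :: L), code τ = T[i] :=
    mem_codes_of_mem_transversal (fun _ => mem_codes_chainGroup hL) (List.getElem_mem i.2)
  choose τ hτ hcode using hcodes
  have exists_index {g : Perm (Fin n)} (hg : code g ∈ T) : ∃ i, τ i = g := by
    obtain ⟨i, hi, hgi⟩ := List.mem_iff_getElem.1 hg
    exact ⟨⟨i, hi⟩, code_injective ((hcode _).trans hgi)⟩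
  have hinj : Function.Injective fun i => τ i • b := by
    intro i j hij
    refine Fin.ext ((hnodup.getElem_inj_iff (hi := by simp) (hj := by simp)).1 ?_)
    have hdigit (i : Fin T.length) : digit n T[(i : ℕ)] b = τ i b := hcode i ▸ digit_code (τ i) b
    rw [List.getElem_map, List.getElem_map, hdigit, hdigit]
    exact congrArg Fin.val hij
  have hstep (s) (hs : s ∈ {g | code g ∈ chainGens ((b, S) :: L)}) (i : Fin T.length) :
      ∃ j, (τ j)⁻¹ * (s * τ i) ∈ chainGroup L := by
    have := hsifts _ hs _ (List.getElem_mem i.2)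
    rw [← Fin.getElem_fin, ← hcode, ← code_mul] at this
    obtain ⟨σ, -, hσ, hres⟩ := exists_sifts_of_sifts_cons hL this
    obtain ⟨j, rfl⟩ := exists_index hσ
    exact ⟨j, mem_chainGroup_of_sifts (fun c hc => hL c (List.mem_append_right S hc)) hres⟩
  rw [chainGroup, card_closure_eq_mul_card chainGroup_le_chainGroup_cons
    (chainGroup_le_stabilizer hfix) hτ hinj (exists_index (code_one ▸ hone)) hstep,
    Nat.card_fin]

theorem card_chainGroup (hL : ∀ c ∈ chainGens L, c ∈ codes H) (h : isStrong L) :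
    Nat.card (chainGroup L) = chainOrder L := by
  induction L with
  | nil => simp [chainGroup, chainGens, chainOrder]
  | cons l L ih =>
    obtain ⟨b, S⟩ := l
    rw [card_chainGroup_cons hL h, chainOrder, ih (fun c hc => hL c (List.mem_append_right S hc))]
    simp only [isStrong, decide_eq_true_eq] at h
    exact h.2.2.2.2

end StabilizerChain

section Primitivity

variable {G X : Type*} [Group G] [MulAction G X]

theorem subset_of_isBlock_of_mem {B Δ : Set X} (hB : MulAction.IsBlock G B) {a p : X} (ha : a ∈ B)
    (hΔ : ∀ i ∈ Δ, ∃ g : G, g • a = a ∧ g • p = i) {i : X} (hi : i ∈ Δ) (hiB : i ∈ B) : Δ ⊆ B := by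
  have smul_mem {g : G} (hg : g • a = a) {j : X} (hj : j ∈ B) : g • j ∈ B := by
    rw [← hB.smul_eq_of_mem ha (by rwa [hg])]
    exact Set.smul_mem_smul_set hj
  obtain ⟨g, hga, rfl⟩ := hΔ i hi
  have hp : p ∈ B := by simpa using smul_mem (inv_smul_eq_iff.2 hga.symm) hiB
  intro j hj
  obtain ⟨h, hha, rfl⟩ := hΔ j hj
  exact smul_mem hha hp

/-- A block containing `a` is a union of orbits of the stabilizer of `a`, and its size divides the
degree. -/
theorem isPreprimitive_of_two_suborbits [Finite X] [MulAction.IsPretransitive G X] {a p q : X}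
    {Δ : Set X} (ha : a ∉ Δ) (hp : ∀ i ∈ Δ, ∃ g : G, g • a = a ∧ g • p = i)
    (hq : ∀ i ∈ (insert a Δ)ᶜ, ∃ g : G, g • a = a ∧ g • q = i)
    (hΔ : ¬ Δ.ncard + 1 ∣ Nat.card X) (hΔ' : ¬ Δᶜ.ncard ∣ Nat.card X) :
    MulAction.IsPreprimitive G X := by
  refine MulAction.IsPreprimitive.of_isTrivialBlock_base a fun {B} haB hB => ?_
  have hdvd : B.ncard ∣ Nat.card X := hB.ncard_dvd_card ⟨a, haB⟩
  by_cases hBΔ : ∃ i ∈ B, i ∈ Δ <;> by_cases hBΔ' : ∃ i ∈ B, i ∈ (insert a Δ)ᶜ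
  · obtain ⟨⟨i, hiB, hi⟩, j, hjB, hj⟩ := And.intro hBΔ hBΔ'
    have hsub := subset_of_isBlock_of_mem hB haB hp hi hiB
    have hsub' := subset_of_isBlock_of_mem hB haB hq hj hjB
    exact Or.inr (Set.eq_univ_of_forall fun k => by grind)
  · obtain ⟨i, hiB, hi⟩ := hBΔ
    have hsub := subset_of_isBlock_of_mem hB haB hp hi hiB
    have hBeq : B = insert a Δ := by ext k; grind
    exact absurd (Set.ncard_insert_of_notMem ha ▸ hBeq ▸ hdvd) hΔ
  · obtain ⟨j, hjB, hj⟩ := hBΔ'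
    have hsub := subset_of_isBlock_of_mem hB haB hq hj hjB
    have hBeq : B = Δᶜ := by ext k; grind
    exact absurd (hBeq ▸ hdvd) hΔ'
  · exact Or.inl (Set.subsingleton_of_subset_singleton (a := a) fun k hk => by grind)

theorem isPreprimitive_of_smul_eq_smul {H : Type*} [Group H] [MulAction H X]
    [MulAction.IsPreprimitive H X] (φ : H → G) (hφ : ∀ (h : H) (i : X), φ h • i = h • i) :
    MulAction.IsPreprimitive G X :=
  .of_surjective (φ := φ) (f := ⟨id, fun h i => (hφ h i).symm⟩) Function.surjective_id

theorem not_le_closure_of_forall_smul_mem [Finite G] {H : Subgroup G}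
    [MulAction.IsPretransitive H X] {S : Set G} {B : Set X} (hS : ∀ s ∈ S, ∀ i ∈ B, s • i ∈ B)
    {i j : X} (hi : i ∈ B) (hj : j ∉ B) : ¬ H ≤ Subgroup.closure S := by
  intro hle
  obtain ⟨g, rfl⟩ := MulAction.exists_smul_eq H i j
  exact hj (smul_mem_of_mem_closure hS (hle g.2) hi)

variable {n : ℕ} {H : Subgroup (Perm (Fin n))} {S T : List ℕ} {a p q : Fin n}

theorem isPretransitive_of_orbitList (hS : ∀ s ∈ S, s ∈ codes H)
    (ha : ∀ i : Fin n, (i : ℕ) ∈ orbitList n S a) : MulAction.IsPretransitive H (Fin n) := by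
  refine (MulAction.isPretransitive_iff_base a).2 fun i => ?_
  obtain ⟨g, hg, rfl⟩ := exists_apply_eq_of_mem_orbitList hS (ha i)
  exact ⟨⟨g, hg⟩, rfl⟩

theorem isPreprimitive_of_orbitList (hS : ∀ s ∈ S, s ∈ codes H)
    (ha : ∀ i : Fin n, (i : ℕ) ∈ orbitList n S a)
    (hT : ∀ t ∈ T, t ∈ codes H) (hTa : ∀ t ∈ T, digit n t a = a) {Δ : Finset (Fin n)} (haΔ : a ∉ Δ)
    (hp : ∀ i ∈ Δ, (i : ℕ) ∈ orbitList n T p) (hq : ∀ i ∈ (insert a Δ)ᶜ, (i : ℕ) ∈ orbitList n T q)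
    (hΔ : ¬ Δ.card + 1 ∣ n) (hΔ' : ¬ Δᶜ.card ∣ n) : MulAction.IsPreprimitive H (Fin n) := by
  have := isPretransitive_of_orbitList hS ha
  have hTstab (t) (ht : t ∈ T) : t ∈ codes (H ⊓ MulAction.stabilizer (Perm (Fin n)) a) := by
    obtain ⟨g, hg, rfl⟩ := hT t ht
    exact code_mem_codes.2 ⟨hg, Fin.ext ((digit_code g a).symm.trans (hTa _ ht))⟩
  have exists_smul {r i : Fin n} (hi : (i : ℕ) ∈ orbitList n T r) :
      ∃ g : H, g • a = a ∧ g • r = i := by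
    obtain ⟨g, ⟨hg, hga⟩, hgr⟩ := exists_apply_eq_of_mem_orbitList hTstab hi
    exact ⟨⟨g, hg⟩, hga, hgr⟩
  refine isPreprimitive_of_two_suborbits (Δ := (Δ : Set (Fin n))) haΔ
    (fun i hi => exists_smul (hp i hi)) (fun i hi => exists_smul (hq i (by simpa using hi))) ?_ ?_
  · rwa [Set.ncard_coe_finset, Nat.card_fin]
  · rwa [← Finset.coe_compl, Set.ncard_coe_finset, Nat.card_fin]

end Primitivity

section AlmostSimple

variable {G X : Type*} [Group G] [MulAction G X] {p : ℕ}

theorem isPretransitive_of_normal_of_ne_bot [FaithfulSMul G X]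
    [MulAction.IsPreprimitive G X] {N : Subgroup G} [N.Normal] (hN : N ≠ ⊥) :
    MulAction.IsPretransitive N X := by
  refine MulAction.IsQuasiPreprimitive.isPretransitive_of_normal (G := G) fun hfix => hN ?_
  refine N.eq_bot_iff_forall.2 fun g hg => FaithfulSMul.eq_of_smul_eq_smul (α := X) fun i => ?_
  have hi : i ∈ MulAction.fixedPoints N X := hfix ▸ Set.mem_univ i
  rw [one_smul]
  exact hi ⟨g, hg⟩

theorem mem_of_pow_eq_one_of_coprime_index {N : Subgroup G} [N.Normal] (hp : p.Coprime N.index)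
    {g : G} (hg : g ^ p = 1) : g ∈ N := by
  rw [← QuotientGroup.eq_one_iff, ← orderOf_eq_one_iff]
  refine Nat.eq_one_of_dvd_coprimes hp (orderOf_dvd_of_pow_eq_one ?_) (orderOf_dvd_natCard _)
  rw [← QuotientGroup.mk_pow, hg, QuotientGroup.mk_one]

/-- A nontrivial normal subgroup is transitive, so `p` divides its order and not its index. -/
theorem mem_of_pow_prime_eq_one [FaithfulSMul G X] [MulAction.IsPreprimitive G X] [Nonempty X]
    (hp : p.Prime) (hX : p ∣ Nat.card X) (hG : ¬ p ^ 2 ∣ Nat.card G) {N : Subgroup G} [N.Normal]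
    (hN : N ≠ ⊥) {g : G} (hg : g ^ p = 1) : g ∈ N := by
  have := isPretransitive_of_normal_of_ne_bot (X := X) hN
  have hpN : p ∣ Nat.card N := by
    rw [← MulAction.index_stabilizer_of_transitive N (Classical.arbitrary X)] at hX
    exact hX.trans (Subgroup.index_dvd_card _)
  refine mem_of_pow_eq_one_of_coprime_index ((hp.coprime_iff_not_dvd).2 fun hdvd => hG ?_) hg
  rw [← N.card_mul_index, sq]
  exact mul_dvd_mul hpN hdvd

/-- The subgroup generated by the elements whose order divides `p`. For a prime `p` as in
`isSimpleGroup_torsionClosure`, it is the socle. -/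
def torsionClosure (G : Type*) [Group G] (p : ℕ) : Subgroup G := Subgroup.closure {g | g ^ p = 1}

instance torsionClosure_normal (G : Type*) [Group G] (p : ℕ) : (torsionClosure G p).Normal := by
  refine ⟨fun s hs g => ?_⟩
  have hle : torsionClosure G p ≤ (torsionClosure G p).comap (MulAut.conj g).toMonoidHom :=
    (Subgroup.closure_le _).2 fun s (hs : s ^ p = 1) =>
      Subgroup.subset_closure (show (g * s * g⁻¹) ^ p = 1 by rw [conj_pow, hs]; group)
  exact hle hs

theorem isPreprimitive_torsionClosure {H : Subgroup G} {S : Set G}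
    [MulAction.IsPreprimitive (Subgroup.closure S) X] (hSH : S ⊆ H) (hS : ∀ s ∈ S, s ^ p = 1) :
    MulAction.IsPreprimitive (torsionClosure H p) X := by
  have hle : Subgroup.closure S ≤ (torsionClosure H p).map H.subtype :=
    (Subgroup.closure_le _).2 fun s hs =>
      ⟨⟨s, hSH hs⟩, Subgroup.subset_closure (Subtype.ext (hS s hs)), rfl⟩
  choose φ hφ heq using fun g : Subgroup.closure S => hle g.2
  exact isPreprimitive_of_smul_eq_smul (fun g => (⟨φ g, hφ g⟩ : torsionClosure H p))
    fun g i => congrArg (· • i) (heq g)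

variable [FaithfulSMul G X] [MulAction.IsPreprimitive (torsionClosure G p) X] [Nonempty X]

theorem isSimpleGroup_torsionClosure [Nontrivial (torsionClosure G p)] (hp : p.Prime)
    (hX : p ∣ Nat.card X) (hG : ¬ p ^ 2 ∣ Nat.card G) : IsSimpleGroup (torsionClosure G p) := by
  refine ⟨fun N _ => or_iff_not_imp_left.2 fun hN => ?_⟩
  have hcard : ¬ p ^ 2 ∣ Nat.card (torsionClosure G p) := fun h =>
    hG (h.trans (Subgroup.card_subgroup_dvd_card _))
  have hle : torsionClosure G p ≤ N.map (torsionClosure G p).subtype :=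
    (Subgroup.closure_le _).2 fun g hg => ⟨⟨g, Subgroup.subset_closure hg⟩,
      mem_of_pow_prime_eq_one hp hX hcard hN (Subtype.ext hg), rfl⟩
  rw [eq_top_iff]
  rintro s -
  exact (Subgroup.mem_map_iff_mem (Subgroup.subtype_injective _)).1 (hle s.2)

theorem centralizer_torsionClosure_eq_bot (hp : p.Prime) (hX : p ∣ Nat.card X)
    (hG : ¬ p ^ 2 ∣ Nat.card G) {a b : G} (ha : a ^ p = 1) (hb : b ^ p = 1) (hab : a * b ≠ b * a) :
    Subgroup.centralizer (torsionClosure G p : Set G) = ⊥ := by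
  have : MulAction.IsPreprimitive G X :=
    isPreprimitive_of_smul_eq_smul (torsionClosure G p).subtype fun _ _ => rfl
  by_contra hne
  have hmem := mem_of_pow_prime_eq_one hp hX hG hne hb
  exact hab (Subgroup.mem_centralizer_iff.1 hmem a (Subgroup.subset_closure ha))

theorem exists_normal_isSimpleGroup_centralizer_eq_bot (hp : p.Prime) (hX : p ∣ Nat.card X)
    (hG : ¬ p ^ 2 ∣ Nat.card G) {a b : G} (ha : a ^ p = 1) (hb : b ^ p = 1) (hab : a * b ≠ b * a) :
    ∃ S : Subgroup G, S.Normal ∧ IsSimpleGroup S ∧ (∃ a b : S, a * b ≠ b * a) ∧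
      Subgroup.centralizer (S : Set G) = ⊥ := by
  have hnoncomm : ∃ a b : torsionClosure G p, a * b ≠ b * a :=
    ⟨⟨a, Subgroup.subset_closure ha⟩, ⟨b, Subgroup.subset_closure hb⟩,
      fun h => hab (congrArg Subtype.val h)⟩
  have : Nontrivial (torsionClosure G p) := let ⟨_, _, h⟩ := hnoncomm; ⟨_, _, h⟩
  exact ⟨torsionClosure G p, inferInstance, isSimpleGroup_torsionClosure hp hX hG, hnoncomm,
    centralizer_torsionClosure_eq_bot hp hX hG ha hb hab⟩

end AlmostSimple

section Rigidity

variable {G : Type*} [Group G] {H : Subgroup G}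

/-- After a conjugation `y' = y`, so only the choice of `z'` in its class matters. -/
theorem exists_conj_eq_of_mul_eq_one {x y z : G} (hxyz : x * y * z = 1)
    (hrigid : ∀ w, (∃ g ∈ H, g * z * g⁻¹ = w) → (∃ g ∈ H, g * x * g⁻¹ = (y * w)⁻¹) →
      H ≤ Subgroup.closure {y, w} → ∃ c ∈ H, c * y * c⁻¹ = y ∧ c * z * c⁻¹ = w)
    {x' y' z' : G} (hxyz' : x' * y' * z' = 1) (hgen : H ≤ Subgroup.closure {x', y'})
    (hx' : ∃ g ∈ H, g * x * g⁻¹ = x') (hy' : ∃ g ∈ H, g * y * g⁻¹ = y')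
    (hz' : ∃ g ∈ H, g * z * g⁻¹ = z') :
    ∃ g ∈ H, g * x * g⁻¹ = x' ∧ g * y * g⁻¹ = y' ∧ g * z * g⁻¹ = z' := by
  have eq_of_mul_eq_one {a b c : G} (h : a * b * c = 1) : a = (b * c)⁻¹ :=
    eq_inv_of_mul_eq_one_left (by rwa [← mul_assoc])
  obtain ⟨gx, hgx, hx'⟩ := hx'
  obtain ⟨g, hg, rfl⟩ := hy'
  obtain ⟨gz, hgz, hz'⟩ := hz'
  set w := g⁻¹ * z' * g with hw
  have hx'w : g⁻¹ * x' * g = (y * w)⁻¹ := by rw [eq_of_mul_eq_one hxyz', hw]; group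
  have hle : Subgroup.closure {x', g * y * g⁻¹} ≤
      (Subgroup.closure {y, w}).comap (MulAut.conj g⁻¹).toMonoidHom := by
    have hy : y ∈ Subgroup.closure {y, w} := Subgroup.subset_closure (by simp)
    have hw : w ∈ Subgroup.closure {y, w} := Subgroup.subset_closure (by simp)
    rw [Subgroup.closure_le, Set.pair_subset_iff]
    simpa [hx'w, mul_assoc, ← mul_inv_rev] using ⟨mul_mem hy hw, hy⟩
  obtain ⟨c, hc, hcy, hcz⟩ := hrigid w
    ⟨g⁻¹ * gz, mul_mem (inv_mem hg) hgz, by rw [hw, ← hz']; group⟩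
    ⟨g⁻¹ * gx, mul_mem (inv_mem hg) hgx, by rw [← hx'w, ← hx']; group⟩
    fun h hh => by simpa [mul_assoc] using hle (hgen (mul_mem (mul_mem hg hh) (inv_mem hg)))
  have hy' : g * c * y * (g * c)⁻¹ = g * y * g⁻¹ := by nth_rw 2 [← hcy]; group
  have hz' : g * c * z * (g * c)⁻¹ = z' := by
    rw [show g * c * z * (g * c)⁻¹ = g * (c * z * c⁻¹) * g⁻¹ by group, hcz, hw]; group
  refine ⟨g * c, mul_mem hg hc, ?_, hy', hz'⟩
  rw [eq_of_mul_eq_one hxyz, eq_of_mul_eq_one hxyz', ← hy', ← hz']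
  group

theorem code_conj_mem_of_mem_closure {n : ℕ} {S : Set (Perm (Fin n))} {L : List ℕ}
    {g h : Perm (Fin n)} (hL : ∀ s ∈ S, ∀ c ∈ L, conjCode n (code s) c ∈ L) (hh : code h ∈ L)
    (hg : g ∈ Subgroup.closure S) : code (g * h * g⁻¹) ∈ L := by
  refine closure_induction_mul_left (P := fun g => code (g * h * g⁻¹) ∈ L) (by simpa) ?_ hg
  intro s hs g hg
  rw [show s * g * h * (s * g)⁻¹ = s * (g * h * g⁻¹) * s⁻¹ by group, code_conj]
  exact hL s hs _ hg

end Rigidity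

section Rationality

theorem exists_conj_eq_zpow {G : Type*} [Group G] {H : Subgroup G} {g : G} (hg : IsOfFinOrder g)
    (h : ∀ k < orderOf g, k.Coprime (orderOf g) → ∃ r ∈ H, r * g * r⁻¹ = g ^ k) {k : ℤ}
    (hk : Int.gcd k (orderOf g) = 1) : ∃ r ∈ H, r * g * r⁻¹ = g ^ k := by
  have hpos : (0 : ℤ) < orderOf g := by exact_mod_cast hg.orderOf_pos
  lift k % orderOf g to ℕ using Int.emod_nonneg k hpos.ne' with m hm
  have hmk : g ^ m = g ^ k := by rw [← zpow_natCast, hm, zpow_mod_orderOf]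
  rw [← hmk]
  refine h m (by exact_mod_cast hm ▸ Int.emod_lt_of_pos k hpos) ?_
  rw [Nat.Coprime, ← Int.gcd_natCast_natCast, hm, Int.gcd_emod, hk]

theorem exists_conj_eq_zpow_of_codes {n N : ℕ} {H : Subgroup (Perm (Fin n))} {g : Perm (Fin n)}
    {R : List ℕ} (hR : ∀ r ∈ R, r ∈ codes H) (hN : orderOf g = N)
    (h : ∀ k < N, k.Coprime N →
      ∃ r ∈ R, conjCode n r (code g) = prodCode n (List.replicate k (code g)))
    {k : ℤ} (hk : Int.gcd k (orderOf g) = 1) : ∃ r ∈ H, r * g * r⁻¹ = g ^ k := by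
  subst hN
  refine exists_conj_eq_zpow (isOfFinOrder_of_finite g) (fun k hkN hk => ?_) hk
  obtain ⟨c, hc, heq⟩ := h k hkN hk
  obtain ⟨r, hr, rfl⟩ := hR c hc
  exact ⟨r, hr, code_injective (by rw [code_conj, heq, code_pow])⟩

end Rationality

section CycleType

theorem cycleType_permOfCycles {n : ℕ} {cs : List (List (Fin n))} (hnodup : cs.flatten.Nodup)
    (hlength : ∀ c ∈ cs, 2 ≤ c.length) :
    (permOfCycles cs).cycleType = (cs.map List.length : List ℕ) := by
  obtain ⟨hnodup, hdisj⟩ := List.nodup_flatten.1 hnodup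
  have card_support (c) (hc : c ∈ cs) : c.formPerm.support.card = c.length := by
    have hne (i : Fin n) : c ≠ [i] := by
      rintro rfl
      exact absurd (hlength _ hc) (by simp)
    rw [List.support_formPerm_of_nodup c (hnodup c hc) hne,
      List.toFinset_card_of_nodup (hnodup c hc)]
  rw [permOfCycles, Perm.cycleType_eq (cs.map List.formPerm) rfl, List.map_map]
  · exact congrArg _ (List.map_congr_left card_support)
  · rw [List.forall_mem_map]
    exact fun c hc => List.isCycle_formPerm (hnodup c hc) (hlength c hc)
  · rw [List.pairwise_map]
    exact hdisj.imp_of_mem fun ha hb hab => (List.formPerm_disjoint_iff (hnodup _ ha)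
      (hnodup _ hb) (hlength _ ha) (hlength _ hb)).2 hab

end CycleType

section Triple

/-- The code of `x`. -/
def xCode : ℕ :=
  20088828255019241847859702377143989085354872629205923250875260784895706489584252791216229052446520

/-- The code of `y`. -/
def yCode : ℕ :=
  62258379662031858032020619180683976088777095411162758725575986223336774335237202413344418833160380

theorem code_x : code x = xCode := by decide +kernel

theorem code_y : code y = yCode := by decide +kernel

/-- The group generated by the triple. -/
abbrev G : Subgroup (Perm (Fin 56)) := Subgroup.closure {x, y}

/-- The code of the third element of the triple. -/
def zCode : ℕ := invCode 56 (mulCode 56 xCode yCode)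

theorem code_z : code (x * y)⁻¹ = zCode := by rw [code_inv, code_mul, code_x, code_y, zCode]

theorem xCode_mem_codes : xCode ∈ codes G :=
  code_x ▸ code_mem_codes.2 (Subgroup.subset_closure (Set.mem_insert x {y}))

theorem yCode_mem_codes : yCode ∈ codes G :=
  code_y ▸ code_mem_codes.2 (Subgroup.subset_closure (Set.mem_insert_of_mem x rfl))

/-- The code of a word in `x` and `y`. -/
def xyCode (w : List (ℕ × ℕ)) : ℕ := wordCode 56 xCode yCode w

theorem xyCode_mem_codes (w : List (ℕ × ℕ)) : xyCode w ∈ codes G :=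
  wordCode_mem_codes xCode_mem_codes yCode_mem_codes w

/-- The cycles of `(x * y)⁻¹`. -/
def zCycles : List (List (Fin 56)) :=
  [[0, 52], [1, 34], [2, 27], [3, 38], [4, 45], [5, 54], [6, 39], [8, 50], [11, 30], [12, 42],
   [14, 28], [15, 23], [16, 37], [18, 49], [19, 20], [21, 31], [22, 29], [25, 55], [26, 35],
   [32, 36], [33, 44], [40, 53], [41, 51], [43, 48], [46, 47]]

theorem z_eq_permOfCycles : (x * y)⁻¹ = permOfCycles zCycles :=
  code_injective (code_z.trans (by decide +kernel))

theorem cycleType_x : x.cycleType = Multiset.replicate 12 4 + Multiset.replicate 2 2 :=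
  (cycleType_permOfCycles (by decide +kernel) (by decide +kernel)).trans (by decide +kernel)

theorem cycleType_y : y.cycleType =
    Multiset.replicate 6 8 + Multiset.replicate 1 4 + Multiset.replicate 2 2 :=
  (cycleType_permOfCycles (by decide +kernel) (by decide +kernel)).trans (by decide +kernel)

theorem cycleType_z : ((x * y)⁻¹).cycleType = Multiset.replicate 25 2 := by
  rw [z_eq_permOfCycles]
  exact (cycleType_permOfCycles (by decide +kernel) (by decide +kernel)).trans (by decide +kernel)

theorem orderOf_x : orderOf x = 4 := by rw [← Perm.lcm_cycleType, cycleType_x]; decide +kernel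

theorem orderOf_y : orderOf y = 8 := by rw [← Perm.lcm_cycleType, cycleType_y]; decide +kernel

theorem orderOf_z : orderOf (x * y)⁻¹ = 2 := by
  rw [← Perm.lcm_cycleType, cycleType_z]; decide +kernel

theorem permInd_add_permInd_add_permInd :
    permInd x + permInd y + permInd (x * y)⁻¹ = 2 * (56 - 1) := by
  rw [permInd, permInd, permInd, cycleType_x, cycleType_y, cycleType_z]
  decide +kernel

end Triple

section Order

/-- A stabilizer chain for `G` along the points `0`, `36`, `38`, `1`. -/
def stabChain : List (Fin 56 × List ℕ) :=
  [(0, [xCode, yCode]), (36, [xyCode [(0, 1), (1, 0)]]),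
   (38, [xyCode [(0, 2), (3, 2), (3, 0)]]),
   (1, [xyCode [(0, 2), (2, 2), (2, 3), (2, 0)],
        xyCode [(0, 3), (3, 1), (2, 3), (2, 3), (3, 1), (1, 0)]])]

theorem isStrong_stabChain : isStrong stabChain ∧ chainOrder stabChain = 80640 := by
  decide +kernel

theorem forall_mem_chainGens_stabChain : ∀ c ∈ chainGens stabChain, c ∈ codes G := by
  simp [chainGens, stabChain, xCode_mem_codes, yCode_mem_codes, xyCode_mem_codes]

theorem chainGroup_stabChain : chainGroup stabChain = G := by
  refine le_antisymm ((Subgroup.closure_le _).2 fun g hg =>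
    code_mem_codes.1 (forall_mem_chainGens_stabChain _ hg)) (Subgroup.closure_mono ?_)
  rintro g (rfl | rfl)
  · simp [chainGens, stabChain, code_x]
  · simp [chainGens, stabChain, code_y]

theorem card_G : Nat.card G = 80640 := by
  rw [← chainGroup_stabChain, card_chainGroup forall_mem_chainGens_stabChain isStrong_stabChain.1,
    isStrong_stabChain.2]

theorem G_ne_alternatingGroup : G ≠ alternatingGroup (Fin 56) := by
  intro h
  have hcard := two_mul_nat_card_alternatingGroup (α := Fin 56)
  rw [← h, card_G, Nat.card_perm, Nat.card_fin] at hcard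
  exact absurd hcard (by decide +kernel)

theorem G_ne_top : G ≠ ⊤ := by
  intro h
  have hcard := card_G
  rw [h, Subgroup.card_top, Nat.card_perm, Nat.card_fin] at hcard
  exact absurd hcard (by decide +kernel)

end Order

section RationalClasses

/-- Codes of elements of `G` that conjugate `x` to `x ^ 3`, and `y` to `y ^ 3`, `y ^ 5` and `y ^ 7`,
preceded by the code of the identity. -/
def powerConjugators : List ℕ :=
  [[], [(0, 2), (2, 2), (2, 2), (2, 1)], [(1, 3), (2, 3), (2, 3), (1, 0)],
   [(2, 1), (2, 2), (3, 2), (2, 1), (2, 0)], [(1, 2), (2, 2), (2, 2), (2, 0)]].map xyCode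

theorem mem_codes_of_mem_powerConjugators {c : ℕ} (hc : c ∈ powerConjugators) : c ∈ codes G := by
  obtain ⟨w, -, rfl⟩ := List.mem_map.1 hc
  exact xyCode_mem_codes w

theorem exists_conj_eq_zpow_of_mem_triple {g : Perm (Fin 56)} (hg : g ∈ ({x, y, (x * y)⁻¹} : Set _))
    {k : ℤ} (hk : Int.gcd k (orderOf g) = 1) : ∃ h ∈ G, h * g * h⁻¹ = g ^ k := by
  have of_codes {N : ℕ} := exists_conj_eq_zpow_of_codes (N := N) (g := g)
    fun _ => mem_codes_of_mem_powerConjugators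
  rcases hg with rfl | rfl | rfl
  · exact of_codes orderOf_x (by rw [code_x]; decide +kernel) hk
  · exact of_codes orderOf_y (by rw [code_y]; decide +kernel) hk
  · exact of_codes orderOf_z (by rw [code_z]; decide +kernel) hk

end RationalClasses

section Socle

/-- One of two elements of order `7` that generate a primitive subgroup. -/
def a₇ : Perm (Fin 56) := y ^ 2 * x ^ 2

/-- The other of two elements of order `7` that generate a primitive subgroup. -/
def b₇ : Perm (Fin 56) := x * y ^ 2 * x

/-- The code of `a₇`. -/
def aCode : ℕ := xyCode [(0, 2), (2, 0)]

/-- The code of `b₇`. -/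
def bCode : ℕ := xyCode [(1, 2), (1, 0)]

theorem code_a₇ : code a₇ = aCode := by
  rw [a₇, code_mul, code_pow, code_pow, code_x, code_y]
  decide +kernel

theorem code_b₇ : code b₇ = bCode := by
  rw [b₇, code_mul, code_mul, code_pow, code_x, code_y]
  decide +kernel

theorem a₇_mem_G : a₇ ∈ G := code_mem_codes.1 (code_a₇ ▸ xyCode_mem_codes _)

theorem b₇_mem_G : b₇ ∈ G := code_mem_codes.1 (code_b₇ ▸ xyCode_mem_codes _)

theorem a₇_pow_seven : a₇ ^ 7 = 1 :=
  code_injective (by rw [code_pow, code_a₇, code_one]; decide +kernel)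

theorem b₇_pow_seven : b₇ ^ 7 = 1 :=
  code_injective (by rw [code_pow, code_b₇, code_one]; decide +kernel)

theorem a₇_mul_b₇_ne : a₇ * b₇ ≠ b₇ * a₇ := by
  rw [← code_injective.ne_iff, code_mul, code_mul, code_a₇, code_b₇]
  decide +kernel

/-- The words `a₇ b₇² a₇` and `a₇² b₇² a₇²` generate a subgroup of the stabilizer of `0` with orbits
of lengths `1`, `10` and `45`. -/
theorem isPreprimitive_closure_a₇_b₇ :
    MulAction.IsPreprimitive (Subgroup.closure {a₇, b₇}) (Fin 56) := by
  have ha : aCode ∈ codes (Subgroup.closure {a₇, b₇}) :=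
    code_a₇ ▸ code_mem_codes.2 (Subgroup.subset_closure (Set.mem_insert a₇ {b₇}))
  have hb : bCode ∈ codes (Subgroup.closure {a₇, b₇}) :=
    code_b₇ ▸ code_mem_codes.2 (Subgroup.subset_closure (Set.mem_insert_of_mem a₇ rfl))
  refine isPreprimitive_of_orbitList (a := 0) (p := 36) (q := 1) (S := [aCode, bCode])
    (T := [[(1, 2), (1, 0)], [(2, 2), (2, 0)]].map (wordCode 56 aCode bCode))
    (Δ := {36, 38, 42, 43, 47, 49, 50, 51, 52, 55}) (by simp [ha, hb]) (by decide +kernel)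
    (fun t ht => ?_) (by decide +kernel) (by decide +kernel) (by decide +kernel)
    (by decide +kernel) (by decide +kernel) (by decide +kernel)
  obtain ⟨w, -, rfl⟩ := List.mem_map.1 ht
  exact wordCode_mem_codes ha hb w

theorem isPreprimitive_torsionClosure_G :
    MulAction.IsPreprimitive (torsionClosure G 7) (Fin 56) := by
  have := isPreprimitive_closure_a₇_b₇
  refine isPreprimitive_torsionClosure (S := {a₇, b₇}) ?_ ?_
  · exact Set.pair_subset a₇_mem_G b₇_mem_G
  · rintro s (rfl | rfl)
    exacts [a₇_pow_seven, b₇_pow_seven]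

theorem isPreprimitive_G : MulAction.IsPreprimitive G (Fin 56) := by
  have := isPreprimitive_torsionClosure_G
  exact isPreprimitive_of_smul_eq_smul (torsionClosure G 7).subtype fun _ _ => rfl

theorem exists_normal_isSimpleGroup_centralizer_eq_bot_G :
    ∃ S : Subgroup G, S.Normal ∧ IsSimpleGroup S ∧ (∃ a b : S, a * b ≠ b * a) ∧
      Subgroup.centralizer (S : Set G) = ⊥ := by
  have := isPreprimitive_torsionClosure_G
  have hX : 7 ∣ Nat.card (Fin 56) := by rw [Nat.card_fin]; norm_num
  have hG : ¬ 7 ^ 2 ∣ Nat.card G := by rw [card_G]; norm_num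
  exact exists_normal_isSimpleGroup_centralizer_eq_bot (a := ⟨a₇, a₇_mem_G⟩) (b := ⟨b₇, b₇_mem_G⟩)
    Nat.prime_seven hX hG (Subtype.ext a₇_pow_seven) (Subtype.ext b₇_pow_seven)
    (by simpa only [ne_eq, MulMemClass.mk_mul_mk, Subtype.mk.injEq] using a₇_mul_b₇_ne)

end Socle

section RigidTriple

/-- The codes of the conjugates of `(x * y)⁻¹` in `G`. -/
def zClass : List ℕ := search [conjCode 56 xCode, conjCode 56 yCode] id 336 zCode

/-- The codes of the elements of `G` that commute with `y`. -/
def yCentralizer : List ℕ :=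
  (List.range 8).flatMap fun i =>
    [[(0, i)], [(0, i), (1, 2), (3, 1), (3, 2), (3, 1), (3, 1), (2, 3), (2, 0)]].map xyCode

/-- Three of the cycles of `y`, which are preserved by some conjugates of `(x * y)⁻¹`. -/
def yCycles : List (List ℕ) := [[8, 21], [23, 42], [1, 27, 36, 32]]

theorem zClass_spec : zCode ∈ zClass ∧ ∀ w ∈ zClass,
    (conjCode 56 xCode w ∈ zClass ∧ conjCode 56 yCode w ∈ zClass) ∧
    (prodCode 56 (List.replicate 4 (mulCode 56 yCode w)) ≠ oneCode 56 ∨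
      (∃ B ∈ yCycles, ∀ i ∈ B, digit 56 w i ∈ B) ∨
      ∃ c ∈ yCentralizer, mulCode 56 c zCode = mulCode 56 w c) := by
  decide +kernel

theorem yCycles_spec : ∀ B ∈ yCycles, (∀ i ∈ B, digit 56 yCode i ∈ B) ∧
    (∃ i : Fin 56, (i : ℕ) ∈ B) ∧ ∃ i : Fin 56, (i : ℕ) ∉ B := by
  decide +kernel

theorem exists_of_mem_yCentralizer {c : ℕ} (hc : c ∈ yCentralizer) :
    ∃ h ∈ G, code h = c ∧ h * y * h⁻¹ = y := by
  have hcomm : ∀ c ∈ yCentralizer, conjCode 56 c yCode = yCode := by decide +kernel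
  obtain ⟨i, -, hi⟩ := List.mem_flatMap.1 hc
  obtain ⟨w, -, rfl⟩ := List.mem_map.1 hi
  obtain ⟨h, hh, heq⟩ := xyCode_mem_codes w
  exact ⟨h, hh, heq, code_injective (by rw [code_conj, heq, code_y, hcomm _ hc])⟩

theorem code_conj_mem_zClass {g : Perm (Fin 56)} (hg : g ∈ G) :
    code (g * (x * y)⁻¹ * g⁻¹) ∈ zClass := by
  refine code_conj_mem_of_mem_closure (fun s hs c hc => ?_) (code_z ▸ zClass_spec.1) hg
  have hclosed := (zClass_spec.2 c hc).1
  rcases hs with rfl | rfl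
  · rw [code_x]; exact hclosed.1
  · rw [code_y]; exact hclosed.2

theorem not_G_le_closure_of_mem_yCycles {w : Perm (Fin 56)} {B : List ℕ} (hB : B ∈ yCycles)
    (hw : ∀ i ∈ B, digit 56 (code w) i ∈ B) : ¬ G ≤ Subgroup.closure {y, w} := by
  obtain ⟨hy, ⟨i, hi⟩, j, hj⟩ := yCycles_spec B hB
  have := isPreprimitive_G
  refine not_le_closure_of_forall_smul_mem (B := {i : Fin 56 | (i : ℕ) ∈ B}) ?_ hi hj
  rintro s (rfl | rfl) i hi
  · rw [Set.mem_ofPred_eq, Perm.smul_def, ← digit_code, code_y]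
    exact hy i hi
  · rw [Set.mem_ofPred_eq, Perm.smul_def, ← digit_code]
    exact hw i hi

theorem exists_centralizing_conj_eq {w : Perm (Fin 56)} (hw : ∃ g ∈ G, g * (x * y)⁻¹ * g⁻¹ = w)
    (hyw : ∃ g ∈ G, g * x * g⁻¹ = (y * w)⁻¹) (hgen : G ≤ Subgroup.closure {y, w}) :
    ∃ c ∈ G, c * y * c⁻¹ = y ∧ c * (x * y)⁻¹ * c⁻¹ = w := by
  obtain ⟨g, hg, rfl⟩ := hw
  set w := g * (x * y)⁻¹ * g⁻¹
  obtain ⟨gx, -, hgx⟩ := hyw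
  have hpow : (y * w) ^ 4 = 1 := by
    rw [← inv_inj, ← inv_pow, ← hgx, conj_pow, orderOf_dvd_iff_pow_eq_one.1 orderOf_x.dvd]
    group
  rcases (zClass_spec.2 _ (code_conj_mem_zClass hg)).2 with hne | ⟨B, hB, hwB⟩ | ⟨c, hc, hcw⟩
  · rw [← code_y, ← code_mul, ← code_pow, hpow, code_one] at hne
    exact absurd rfl hne
  · exact absurd hgen (not_G_le_closure_of_mem_yCycles hB hwB)
  · obtain ⟨h, hh, rfl, hy⟩ := exists_of_mem_yCentralizer hc
    refine ⟨h, hh, hy, mul_inv_eq_of_eq_mul (code_injective ?_)⟩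
    rw [code_mul, code_mul, code_z, hcw]

end RigidTriple

end NiceTriple

open NiceTriple

theorem nice_triple_deg56_stmt5 :
    IsNice x y (x * y)⁻¹ ∧
    x.cycleType = Multiset.replicate 12 4 + Multiset.replicate 2 2 ∧
    y.cycleType = Multiset.replicate 6 8 + Multiset.replicate 1 4 + Multiset.replicate 2 2 ∧
    ((x * y)⁻¹).cycleType = Multiset.replicate 25 2 ∧
    Nat.card ↥(Subgroup.closure {x, y} : Subgroup (Equiv.Perm (Fin 56))) = 80640 := by
  have hxyz : x * y * (x * y)⁻¹ = 1 := mul_inv_cancel _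
  have hprim := isPreprimitive_G
  refine ⟨⟨hxyz, ⟨G_ne_alternatingGroup, G_ne_top⟩,
    ⟨hprim.toIsPretransitive, fun _ => hprim.isTrivialBlock_of_isBlock⟩,
    exists_normal_isSimpleGroup_centralizer_eq_bot_G, permInd_add_permInd_add_permInd, ?_,
    fun _ hg _ => exists_conj_eq_zpow_of_mem_triple hg⟩,
    cycleType_x, cycleType_y, cycleType_z, card_G⟩
  intro x' y' z' hxyz' hgen
  exact exists_conj_eq_of_mul_eq_one hxyz (fun _ => exists_centralizing_conj_eq) hxyz' hgen.ge
end

section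
/- With p, q ∈ ℚ[X] as in the context (the Belyi map of degree 63 for Aut(PSU(3,3))), the polynomial F = p − t·q ∈ K[X] has degree 63, is irreducible over K = ℚ(t), and its Galois group Polynomial.Gal F (the Galois group of the splitting field of F over K) has cardinality 12096, the order of Aut(PSU(3,3)). -/
open Polynomial

noncomputable section

def r : Polynomial ℚ :=
    -136048896 * (X ^ 2 - X + 2) ^ 7 * (X ^ 3 + 2 * X ^ 2 - X - 1) ^ 7 * (X ^ 3 + 9 * X ^ 2 -
    X - 1) ^ 7

def q : Polynomial ℚ :=
    (X ^ 3 + 30 * X ^ 2 + 27 * X + 6) * (X ^ 6 + 18 * X ^ 5 + 93 * X ^ 4 + 169 * X ^ 3 + 144 *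
    X ^ 2 - 75 * X - 62) ^ 2 * (X ^ 12 + 15 * X ^ 11 - 15 * X ^ 10 - 332 * X ^ 9 - 2766 * X ^
    8 + 4002 * X ^ 7 + 2002 * X ^ 6 - 2496 * X ^ 5 - 1215 * X ^ 4 + 1047 * X ^ 3 + 117 * X ^ 2
    - 108 * X + 36) ^ 4

def p : Polynomial ℚ := q + r

/-- `F = p − t·q ∈ K[X]` where `K = ℚ(t)` and `t = RatFunc.X`. -/
def F : Polynomial (RatFunc ℚ) :=
  p.map (algebraMap ℚ (RatFunc ℚ)) - Polynomial.C RatFunc.X * q.map (algebraMap ℚ (RatFunc ℚ))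

end

/-!
Put `w = 1 / (1 - t)`. Then `F` is a constant times `q + w r`, which is linear in `w` with coprime
coefficients, so Gauss's lemma makes it irreducible over `ℚ(w) = ℚ(t)`.

The polynomial `q(x) r(y) - q(y) r(x)` has a symmetric factor `A(x, y)` of bidegree `(6, 6)`, so the
Galois group `G` acts on the graph in which two roots `x` and `y` of `F` are adjacent when
`A(x, y) = 0`. Modulo `10009` and at `w = 4504` all roots are rational and simple, and the graph can
be read off: it is the collinearity graph of the split Cayley hexagon of order two, which has 63
points, three on each line, and three lines through each point.

An arc is a path in the hexagon that changes lines at each point. Frobenius elements at the primes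
11, 43 and 107 and suitable values of `w` fix short arcs and move their continuations. They show
that `G` is transitive on the `63 · 6 · 4 · 4` arcs with four points, and that the pointwise
stabilizer of such an arc is nontrivial. An automorphism in this stabilizer is determined by the
image of one further point, for which there are two possibilities. Hence `G` has order
`63 · 6 · 4 · 4 · 2`.
-/

namespace BelyiHexagon

section Arcs

variable {V G : Type*} {Γ : SimpleGraph V}

/-- Every edge of `Γ` lies in exactly one triangle. The triangles of such a graph are the lines of a
partial linear space with three points on each line, of which `Γ` is the collinearity graph. -/
def IsTriangular (Γ : SimpleGraph V) : Prop :=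
  ∀ ⦃x y⦄, Γ.Adj x y → ∃! z, Γ.Adj x z ∧ Γ.Adj y z

variable (Γ) in
/-- The points by which an arc can be continued. Arcs are listed from their last point backwards;
the new point is collinear with the last one but lies on a line other than the line just used. -/
def extensions : List V → Set V
  | [] => Set.univ
  | [x] => {y | Γ.Adj x y}
  | x :: w :: _ => {y | Γ.Adj x y ∧ y ≠ w ∧ ¬ Γ.Adj w y}

variable (Γ) in
/-- Sequences of points, listed backwards, in which any two consecutive points are collinear and
consecutive lines are distinct. -/
def IsArc : List V → Prop
  | [] => True
  | y :: l => y ∈ extensions Γ l ∧ IsArc l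

theorem adj_of_mem_extensions {x y : V} {l : List V} (hy : y ∈ extensions Γ (x :: l)) :
    Γ.Adj x y := by
  cases l with
  | nil => exact hy
  | cons => exact hy.1

theorem IsTriangular.eq_or_adj_trans (hΓ : IsTriangular Γ) {x u v w : V} (hu : Γ.Adj x u)
    (hv : Γ.Adj x v) (hw : Γ.Adj x w) (huv : u = v ∨ Γ.Adj u v) (hvw : v = w ∨ Γ.Adj v w) :
    u = w ∨ Γ.Adj u w := by
  rcases huv with rfl | huv
  · exact hvw
  rcases hvw with rfl | hvw
  · exact .inr huv
  exact .inl ((hΓ hv).unique ⟨hu, huv.symm⟩ ⟨hw, hvw⟩)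

theorem IsTriangular.mem_extensions_of_adj (hΓ : IsTriangular Γ) {x y z : V} {l : List V}
    (hl : IsArc Γ (x :: l)) (hy : y ∈ extensions Γ (x :: l)) (hxz : Γ.Adj x z) (hyz : Γ.Adj y z) :
    z ∈ extensions Γ (x :: l) := by
  cases l with
  | nil => exact hxz
  | cons w l =>
    obtain ⟨hxy, hyw, hwy⟩ := hy
    have hxw : Γ.Adj x w := (adj_of_mem_extensions hl.1).symm
    refine ⟨hxz, fun hzw => hwy (hzw ▸ hyz.symm), fun hwz => hyw ?_⟩
    exact (hΓ hxz).unique ⟨hxy, hyz.symm⟩ ⟨hxw, hwz.symm⟩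

theorem IsTriangular.exists_eq_or_adj_of_ncard_lt [Finite V] (hΓ : IsTriangular Γ) {x y : V}
    {l : List V} (hl : IsArc Γ (x :: l)) {S : Finset V}
    (hS : (S : Set V) ⊆ extensions Γ (x :: l)) (hpair : ∀ u ∈ S, ∀ v ∈ S, ¬ Γ.Adj u v)
    (hcard : (extensions Γ (x :: l)).ncard < 2 * (S.card + 1)) (hy : y ∈ extensions Γ (x :: l)) :
    ∃ u ∈ S, y = u ∨ Γ.Adj y u := by
  classical
  by_contra! hfar
  choose! third hthird using fun u (hu : Γ.Adj x u) => (hΓ hu).exists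
  have hsub : ∀ u ∈ insert y S, u ∈ extensions Γ (x :: l) := by
    simpa using ⟨hy, fun u hu => hS hu⟩
  have hxu : ∀ u ∈ insert y S, Γ.Adj x u := fun u hu => adj_of_mem_extensions (hsub u hu)
  have hnonadj : ∀ u ∈ insert y S, ∀ v ∈ insert y S, ¬ Γ.Adj u v := by
    simp only [Finset.mem_insert, forall_eq_or_imp, Γ.irrefl, not_false_eq_true, true_and]
    exact ⟨fun v hv => (hfar v hv).2, fun u hu => ⟨fun h => (hfar u hu).2 h.symm, hpair u hu⟩⟩
  have hinj : Set.InjOn third (insert y S : Finset V) := fun u hu v hv huv =>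
    have hu' := hthird u (hxu u hu)
    have hv' := hthird v (hxu v hv)
    (hΓ hu'.1).unique ⟨hxu u hu, hu'.2.symm⟩ ⟨hxu v hv, huv ▸ hv'.2.symm⟩
  have hdisj : Disjoint (insert y S) ((insert y S).image third) := by
    rw [Finset.disjoint_right]
    simp only [Finset.mem_image]
    rintro _ ⟨u, hu, rfl⟩ hu'
    exact hnonadj u hu _ hu' (hthird u (hxu u hu)).2
  have hle : ((insert y S ∪ (insert y S).image third : Finset V) : Set V).ncard ≤
      (extensions Γ (x :: l)).ncard := by
    refine Set.ncard_le_ncard fun u hu => ?_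
    rcases Finset.mem_union.1 hu with hu | hu
    · exact hsub u hu
    · obtain ⟨v, hv, rfl⟩ := Finset.mem_image.1 hu
      have hv' := hthird v (hxu v hv)
      exact hΓ.mem_extensions_of_adj hl (hsub v hv) hv'.1 hv'.2
  rw [Set.ncard_coe_finset, Finset.card_union_of_disjoint hdisj, Finset.card_image_of_injOn hinj,
    Finset.card_insert_of_notMem fun h => (hfar y h).1 rfl] at hle
  lia

theorem IsTriangular.ncard_extensions_cons_cons [Finite V] (hΓ : IsTriangular Γ) {x w : V}
    {l : List V} (hxw : Γ.Adj x w) :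
    (extensions Γ (x :: w :: l)).ncard + 2 = (extensions Γ [x]).ncard := by
  obtain ⟨z, ⟨hxz, hwz⟩, hz⟩ := hΓ hxw
  have hsplit : extensions Γ [x] = insert w (insert z (extensions Γ (x :: w :: l))) := by
    ext y
    simp only [extensions, Set.mem_ofPred_eq, Set.mem_insert_iff]
    constructor
    · intro hxy
      by_cases hwy : Γ.Adj w y
      · exact .inr (.inl (hz y ⟨hxy, hwy⟩))
      · tauto
    · rintro (rfl | rfl | h)
      exacts [hxw, hxz, h.1]
  rw [hsplit, Set.ncard_insert_of_notMem, Set.ncard_insert_of_notMem]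
  · exact fun h => h.2.2 hwz
  · rintro (h | h)
    exacts [hwz.ne h, h.2.1 rfl]

variable [Group G] [MulAction G V]

variable (G Γ) in
/-- `G` permutes the vertices of `Γ` by graph automorphisms. -/
def ActsOn : Prop :=
  ∀ (g : G) (x y : V), Γ.Adj (g • x) (g • y) ↔ Γ.Adj x y

variable (G Γ) in
/-- Any two arcs with `n` points are related by an element of `G`. -/
def IsArcTransitive (n : ℕ) : Prop :=
  ∀ ⦃l m : List V⦄, IsArc Γ l → IsArc Γ m → l.length = n → m.length = n →
    ∃ g : G, l.map (g • ·) = m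

theorem ActsOn.smul_mem_extensions_iff (hG : ActsOn G Γ) (g : G) (y : V) (l : List V) :
    g • y ∈ extensions Γ (l.map (g • ·)) ↔ y ∈ extensions Γ l := by
  match l with
  | [] => simp [extensions]
  | [x] => exact hG g x y
  | x :: w :: l => simp [extensions, hG g]

theorem map_smul_eq_self_iff {g : G} {l : List V} :
    l.map (g • ·) = l ↔ g ∈ fixingSubgroup G {x | x ∈ l} := by
  rw [mem_fixingSubgroup_iff]
  conv_lhs => rhs; rw [← List.map_id l]
  exact List.map_inj_left

theorem ActsOn.eq_or_adj_smul_iff (hG : ActsOn G Γ) (g : G) (x y : V) :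
    (g • x = g • y ∨ Γ.Adj (g • x) (g • y)) ↔ (x = y ∨ Γ.Adj x y) := by
  rw [hG, smul_left_cancel_iff]

theorem map_mul_smul {g h : G} {l m n : List V} (hl : l.map (h • ·) = m)
    (hm : m.map (g • ·) = n) : l.map ((g * h) • ·) = n := by
  simp only [← hm, ← hl, List.map_map, Function.comp_def, mul_smul]

theorem map_inv_smul {g : G} {l m : List V} (hl : l.map (g • ·) = m) :
    m.map (g⁻¹ • ·) = l := by
  simp only [← hl, List.map_map, Function.comp_def, inv_smul_smul, List.map_id']

theorem isArcTransitive_of_forall_exists {n : ℕ} {l : List V}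
    (hl : ∀ m, IsArc Γ m → m.length = n → ∃ g : G, l.map (g • ·) = m) : IsArcTransitive G Γ n := by
  intro m₁ m₂ h₁ h₂ hn₁ hn₂
  obtain ⟨g₁, hg₁⟩ := hl m₁ h₁ hn₁
  obtain ⟨g₂, hg₂⟩ := hl m₂ h₂ hn₂
  exact ⟨g₂ * g₁⁻¹, map_mul_smul (map_inv_smul hg₁) hg₂⟩

variable (G Γ) in
/-- Some element of `G` fixes the arc `l` and moves one of its extensions to the other point of
the same line. -/
def HasSwap (l : List V) : Prop :=
  IsArc Γ l ∧ ∃ s : G, l.map (s • ·) = l ∧ ∃ d ∈ extensions Γ l, Γ.Adj d (s • d)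

variable (G Γ) in
/-- The elements of `G` that fix the arc `l` move some extension of `l` to all lines that contain
an extension. -/
def HasSpread (l : List V) : Prop :=
  IsArc Γ l ∧ ∃ e ∈ extensions Γ l, ∀ y ∈ extensions Γ l,
    ∃ h : G, l.map (h • ·) = l ∧ (y = h • e ∨ Γ.Adj y (h • e))

variable (G Γ) in
/-- Some element of `G` fixes the arc `l` and its first `k` powers move one of the extensions of `l`
to `k` different lines. -/
def HasJump (k : ℕ) (l : List V) : Prop :=
  IsArc Γ l ∧ ∃ h : G, l.map (h • ·) = l ∧ ∃ e ∈ extensions Γ l,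
    ∀ m, 0 < m → m < k → h ^ m • e ≠ e ∧ ¬ Γ.Adj e (h ^ m • e)

theorem map_pow_smul_eq_self {g : G} {l : List V} (hl : l.map (g • ·) = l) (m : ℕ) :
    l.map (g ^ m • ·) = l :=
  map_smul_eq_self_iff.2 (pow_mem (map_smul_eq_self_iff.1 hl) m)

theorem extensions_append_subset (x : V) (l m : List V) :
    extensions Γ (x :: (l ++ m)) ⊆ extensions Γ (x :: l) := by
  cases l with
  | nil => exact fun y hy => adj_of_mem_extensions hy
  | cons => exact subset_rfl

theorem IsArc.of_append {l m : List V} (hlm : IsArc Γ (l ++ m)) : IsArc Γ l := by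
  induction l with
  | nil => trivial
  | cons y l ih =>
    refine ⟨?_, ih hlm.2⟩
    cases l with
    | nil => trivial
    | cons x l => exact extensions_append_subset x l m hlm.1

theorem map_smul_eq_self_of_append {g : G} {l m : List V}
    (hlm : (l ++ m).map (g • ·) = l ++ m) : l.map (g • ·) = l :=
  (List.append_inj (by rwa [List.map_append] at hlm) (List.length_map _)).1

theorem HasSwap.of_append {x : V} {l m : List V} (hswap : HasSwap G Γ (x :: (l ++ m))) :
    HasSwap G Γ (x :: l) := by
  obtain ⟨hl, s, hs, d, hd, hds⟩ := hswap
  exact ⟨IsArc.of_append (l := x :: l) hl, s, map_smul_eq_self_of_append (l := x :: l) hs, d,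
    extensions_append_subset x l m hd, hds⟩

theorem HasJump.of_append {k : ℕ} {x : V} {l m : List V}
    (hjump : HasJump G Γ k (x :: (l ++ m))) : HasJump G Γ k (x :: l) := by
  obtain ⟨hl, h, hh, e, he, hmove⟩ := hjump
  exact ⟨IsArc.of_append (l := x :: l) hl, h, map_smul_eq_self_of_append (l := x :: l) hh, e,
    extensions_append_subset x l m he, hmove⟩

theorem HasJump.hasSpread [Finite V] (hΓ : IsTriangular Γ) (hG : ActsOn G Γ) {k : ℕ} {x : V}
    {l : List V} (hcard : (extensions Γ (x :: l)).ncard < 2 * (k + 1))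
    (hjump : HasJump G Γ k (x :: l)) : HasSpread G Γ (x :: l) := by
  classical
  obtain ⟨hl, h, hh, e, he, hmove⟩ := hjump
  have hfar : ∀ i j, i < j → j < k → h ^ i • e ≠ h ^ j • e ∧ ¬ Γ.Adj (h ^ i • e) (h ^ j • e) := by
    intro i j hij hjk
    rw [← Nat.add_sub_of_le hij.le, pow_add, mul_smul, hG, Ne, smul_left_cancel_iff]
    have := hmove (j - i) (by lia) (by lia)
    exact ⟨this.1.symm, this.2⟩
  have hinj : Set.InjOn (fun m => h ^ m • e) (Finset.range k) := by
    intro i hi j hj hij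
    rcases lt_trichotomy i j with hlt | heq | hlt
    · exact absurd hij (hfar i j hlt (by simpa using hj)).1
    · exact heq
    · exact absurd hij.symm (hfar j i hlt (by simpa using hi)).1
  have hsub : ((Finset.range k).image fun m => h ^ m • e : Set V) ⊆ extensions Γ (x :: l) := by
    simp only [Finset.coe_image, Set.image_subset_iff]
    intro m _
    have hm := (hG.smul_mem_extensions_iff (h ^ m) e (x :: l)).2 he
    rwa [map_pow_smul_eq_self hh m] at hm
  have hpair : ∀ u ∈ (Finset.range k).image fun m => h ^ m • e,
      ∀ v ∈ (Finset.range k).image fun m => h ^ m • e, ¬ Γ.Adj u v := by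
    simp only [Finset.forall_mem_image, Finset.mem_range]
    intro i hi j hj hij
    rcases lt_trichotomy i j with hlt | rfl | hlt
    · exact (hfar i j hlt hj).2 hij
    · exact hij.ne rfl
    · exact (hfar j i hlt hi).2 hij.symm
  refine ⟨hl, e, he, fun y hy => ?_⟩
  obtain ⟨u, hu, hyu⟩ := hΓ.exists_eq_or_adj_of_ncard_lt hl hsub hpair
    (by rwa [Finset.card_image_of_injOn hinj, Finset.card_range]) hy
  obtain ⟨m, -, rfl⟩ := Finset.mem_image.1 hu
  exact ⟨h ^ m, map_pow_smul_eq_self hh m, hyu⟩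

theorem IsArcTransitive.exists_smul_eq_or_adj (hΓ : IsTriangular Γ) (hG : ActsOn G Γ)
    {x y d : V} {l l' m : List V} (htrans : IsArcTransitive G Γ (m.length + 1))
    (hl : IsArc Γ l) (hn : l.length = m.length + 1) (hd : d ∈ extensions Γ l)
    (hspread : HasSpread G Γ l') (hn' : l'.length = m.length + 1) (hm : IsArc Γ (y :: x :: m)) :
    ∃ u : G, l.map (u • ·) = x :: m ∧ (y = u • d ∨ Γ.Adj y (u • d)) := by
  obtain ⟨hl', e, he, hspread⟩ := hspread
  obtain ⟨g, hg⟩ := htrans hl hl' hn hn'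
  obtain ⟨k, hk⟩ := htrans hl' hm.2 hn' (by simp)
  have hgd : g • d ∈ extensions Γ l' := by rwa [← hg, hG.smul_mem_extensions_iff]
  have hky : k⁻¹ • y ∈ extensions Γ l' := by
    rw [← map_inv_smul hk, hG.smul_mem_extensions_iff]
    exact hm.1
  obtain ⟨h₁, hh₁, hd'⟩ := hspread _ hgd
  obtain ⟨h₂, hh₂, hy'⟩ := hspread _ hky
  have hu : l.map ((k * h₂ * h₁⁻¹ * g) • ·) = x :: m :=
    map_mul_smul hg (map_mul_smul (map_inv_smul hh₁) (map_mul_smul hh₂ hk))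
  have hadj : ∀ (v : V) (b : G) (j : List V), v ∈ extensions Γ j → j.map (b • ·) = x :: m →
      Γ.Adj x (b • v) := fun v b j hv hb =>
    adj_of_mem_extensions (hb ▸ (hG.smul_mem_extensions_iff b v j).2 hv)
  rw [← hG.eq_or_adj_smul_iff k, smul_inv_smul, ← mul_smul] at hy'
  rw [← hG.eq_or_adj_smul_iff (k * h₂ * h₁⁻¹), ← mul_smul, ← mul_smul, inv_mul_cancel_right,
    eq_comm, Γ.adj_comm] at hd'
  exact ⟨_, hu, hΓ.eq_or_adj_trans (adj_of_mem_extensions hm.1)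
    (hadj e _ l' he (map_mul_smul hh₂ hk)) (hadj d _ l hd hu) hy' hd'⟩

theorem IsArcTransitive.succ (hΓ : IsTriangular Γ) (hG : ActsOn G Γ) {n : ℕ} {l l' : List V}
    (htrans : IsArcTransitive G Γ (n + 1)) (hswap : HasSwap G Γ l) (hn : l.length = n + 1)
    (hspread : HasSpread G Γ l') (hn' : l'.length = n + 1) : IsArcTransitive G Γ (n + 2) := by
  obtain ⟨hl, s, hs, d, hd, hds⟩ := hswap
  refine isArcTransitive_of_forall_exists (l := d :: l) fun m hm hmn => ?_
  match m, hmn with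
  | y :: x :: m, hmn =>
    obtain rfl : m.length = n := by simpa using hmn
    obtain ⟨u, hu, hyd⟩ := htrans.exists_smul_eq_or_adj hΓ hG hl hn hd hspread hn' hm
    rcases hyd with rfl | hyd
    · exact ⟨u, by simp [hu]⟩
    have hxd : Γ.Adj x (u • d) :=
      adj_of_mem_extensions (hu ▸ (hG.smul_mem_extensions_iff u d l).2 hd)
    have hxs : Γ.Adj x (u • s • d) := adj_of_mem_extensions (l := m) <| by
      rwa [← hu, hG.smul_mem_extensions_iff, ← hs, hG.smul_mem_extensions_iff]
    have hy : u • s • d = y := (hΓ hxd).unique ⟨hxs, (hG u _ _).2 hds⟩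
      ⟨adj_of_mem_extensions hm.1, hyd.symm⟩
    exact ⟨u * s, by rw [List.map_cons, map_mul_smul hs hu, mul_smul, hy]⟩

theorem IsArcTransitive.card_fixingSubgroup [Finite G] (hG : ActsOn G Γ) {n : ℕ}
    (htrans : IsArcTransitive G Γ (n + 1)) {y : V} {l : List V} (hl : IsArc Γ (y :: l))
    (hn : l.length = n) :
    Nat.card (fixingSubgroup G {x | x ∈ l}) =
      (extensions Γ l).ncard * Nat.card (fixingSubgroup G {x | x ∈ y :: l}) := by
  have horbit : MulAction.orbit (fixingSubgroup G {x | x ∈ l}) y = extensions Γ l := by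
    ext z
    constructor
    · rintro ⟨⟨g, hg⟩, rfl⟩
      rw [← map_smul_eq_self_iff] at hg
      have hgy := (hG.smul_mem_extensions_iff g y l).2 hl.1
      rwa [hg] at hgy
    · intro hz
      obtain ⟨g, hg⟩ := htrans (m := z :: l) hl ⟨hz, hl.2⟩ (by simp [hn]) (by simp [hn])
      rw [List.map_cons, List.cons.injEq] at hg
      exact ⟨⟨g, map_smul_eq_self_iff.1 hg.2⟩, hg.1⟩
  have hstab : MulAction.stabilizer (fixingSubgroup G {x | x ∈ l}) y =
      (fixingSubgroup G {x | x ∈ y :: l}).subgroupOf (fixingSubgroup G {x | x ∈ l}) := by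
    ext ⟨g, hg⟩
    rw [MulAction.mem_stabilizer_iff, Subgroup.mem_subgroupOf, ← map_smul_eq_self_iff,
      List.map_cons, map_smul_eq_self_iff.2 hg, List.cons.injEq, and_iff_left rfl]
    rfl
  have hle : fixingSubgroup G {x | x ∈ y :: l} ≤ fixingSubgroup G {x | x ∈ l} :=
    fixingSubgroup_antitone G V fun x hx => List.mem_cons_of_mem y hx
  rw [← horbit, ← Nat.card_coe_set_eq, ← Nat.card_congr (Subgroup.subgroupOfEquivOfLe hle).toEquiv,
    ← hstab, ← Nat.card_prod, ← Nat.card_congr (MulAction.orbitProdStabilizerEquivGroup _ y)]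

theorem isArcTransitive_two_three_four [Finite V] (hΓ : IsTriangular Γ) (hG : ActsOn G Γ)
    (hdeg : ∀ x, (extensions Γ [x]).ncard = 6) (htrans : IsArcTransitive G Γ 1)
    {b c c₁ c₂ d d₁ d₂ d₃ : V} (hpoint : HasJump G Γ 3 [b]) (hswap : HasSwap G Γ [c, c₁, c₂])
    (hjump : HasJump G Γ 2 [d, d₁, d₂, d₃]) :
    IsArcTransitive G Γ 2 ∧ IsArcTransitive G Γ 3 ∧ IsArcTransitive G Γ 4 := by
  have hcard : ∀ l, (extensions Γ (d :: d₁ :: l)).ncard < 6 := fun l => by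
    have := hΓ.ncard_extensions_cons_cons (l := l) (adj_of_mem_extensions hjump.1.1).symm
    rw [hdeg] at this
    lia
  have htrans₂ : IsArcTransitive G Γ 2 :=
    htrans.succ hΓ hG (hswap.of_append (l := [])) rfl
      (hpoint.hasSpread hΓ hG (by rw [hdeg]; lia)) rfl
  have htrans₃ : IsArcTransitive G Γ 3 :=
    htrans₂.succ hΓ hG (hswap.of_append (l := [c₁])) rfl
      ((hjump.of_append (l := [d₁])).hasSpread hΓ hG (hcard _)) rfl
  have htrans₄ : IsArcTransitive G Γ 4 :=
    htrans₃.succ hΓ hG hswap rfl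
      ((hjump.of_append (l := [d₁, d₂])).hasSpread hΓ hG (hcard _)) rfl
  exact ⟨htrans₂, htrans₃, htrans₄⟩

theorem card_eq_mul_card_fixingSubgroup [Finite G] [Finite V] (hΓ : IsTriangular Γ)
    (hG : ActsOn G Γ) (hdeg : ∀ x, (extensions Γ [x]).ncard = 6) (htrans₁ : IsArcTransitive G Γ 1)
    (htrans₂ : IsArcTransitive G Γ 2) (htrans₃ : IsArcTransitive G Γ 3)
    (htrans₄ : IsArcTransitive G Γ 4) {a b c d : V} (harc : IsArc Γ [d, c, b, a]) :
    Nat.card G =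
      Nat.card V * (6 * (4 * (4 * Nat.card (fixingSubgroup G {x | x ∈ [d, c, b, a]})))) := by
  have hfour : ∀ {x w : V} (l : List V), Γ.Adj w x → (extensions Γ (x :: w :: l)).ncard = 4 :=
    fun {x w} l hwx => by
      have := hΓ.ncard_extensions_cons_cons (l := l) hwx.symm
      rw [hdeg] at this
      lia
  have hnil : fixingSubgroup G {x : V | x ∈ ([] : List V)} = ⊤ :=
    eq_top_iff.2 fun g _ => map_smul_eq_self_iff.1 rfl
  obtain ⟨-, hc, hb, -⟩ := id harc
  rw [← Subgroup.card_top, ← hnil, htrans₁.card_fixingSubgroup hG harc.2.2.2 rfl,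
    htrans₂.card_fixingSubgroup hG harc.2.2 rfl, htrans₃.card_fixingSubgroup hG harc.2 rfl,
    htrans₄.card_fixingSubgroup hG harc rfl, hdeg, hfour _ (adj_of_mem_extensions hb),
    hfour _ (adj_of_mem_extensions hc), extensions, Set.ncard_univ]

theorem card_fixingSubgroup_eq_two {l : List V} {e f : V}
    (hmem : ∀ g ∈ fixingSubgroup G {x | x ∈ l}, g • e = e ∨ g • e = f)
    (hrigid : ∀ g : G, g ∈ fixingSubgroup G {x | x ∈ e :: l} → g = 1)
    (hne : fixingSubgroup G {x | x ∈ l} ≠ ⊥) :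
    Nat.card (fixingSubgroup G {x | x ∈ l}) = 2 := by
  have hinj : Function.Injective
      fun g : fixingSubgroup G {x | x ∈ l} => (⟨g • e, hmem g g.2⟩ : ({e, f} : Set V)) := by
    intro g h hgh
    have hgh' : (h⁻¹ * g) • e = e := by
      rw [mul_smul, inv_smul_eq_iff]
      exact congrArg Subtype.val hgh
    have hfix : ((h⁻¹ * g : fixingSubgroup G {x | x ∈ l}) : G) = 1 := by
      refine hrigid _ (map_smul_eq_self_iff.1 ?_)
      rw [List.map_cons, map_smul_eq_self_iff.2 (h⁻¹ * g).2]
      exact congrArg (· :: l) hgh'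
    exact (inv_mul_eq_one.1 (Subtype.ext hfix)).symm
  have : Finite (fixingSubgroup G {x | x ∈ l}) := Finite.of_injective _ hinj
  refine le_antisymm ?_ ((Subgroup.one_lt_card_iff_ne_bot _).2 hne)
  calc Nat.card (fixingSubgroup G {x | x ∈ l})
      ≤ Nat.card ({e, f} : Set V) := Nat.card_le_card_of_injective _ hinj
    _ ≤ 2 := by
      simpa only [Nat.card_coe_set_eq, Set.ncard_singleton] using Set.ncard_insert_le e {f}

end Arcs

section Hexagon

/-- Collinearity of two distinct points of the split Cayley hexagon of order two, given by the bits
`x₀, x₁, x₂, x₄, x₅, x₆` of their coordinates on the quadric `x₀x₄ + x₁x₅ + x₂x₆ = x₃²` over `𝔽₂`.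
These are Tits' equations for the Grassmann coordinates of the lines of the hexagon. -/
def collinear (m n : ℕ) : Bool :=
  let x := m.testBit
  let y := n.testBit
  let x₃ := (x 0 && x 3) ^^ (x 1 && x 4) ^^ (x 2 && x 5)
  let y₃ := (y 0 && y 3) ^^ (y 1 && y 4) ^^ (y 2 && y 5)
  let minor i j := (x i && y j) ^^ (x j && y i)
  let mixed i := (x₃ && y i) ^^ (x i && y₃)
  m != n && !(minor 0 3 ^^ minor 1 4 ^^ minor 2 5) &&
    minor 1 2 == mixed 3 && minor 2 0 == mixed 4 && minor 0 1 == mixed 5 &&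
    minor 4 5 == mixed 0 && minor 5 3 == mixed 1 && minor 3 4 == mixed 2

/-- The collinearity graph of the split Cayley hexagon of order two. The vertex `i` stands for the
nonzero vector whose coordinates are the binary digits of `i + 1`. -/
def hexagon : SimpleGraph (Fin 63) where
  Adj i j := collinear (i + 1) (j + 1)
  symm := ⟨by decide +kernel⟩
  loopless := ⟨by decide +kernel⟩

instance : DecidableRel hexagon.Adj := fun i j =>
  inferInstanceAs (Decidable (collinear (i + 1) (j + 1) = true))

/-- The third point of the line through two collinear points is the sum of their vectors. -/
def thirdPoint (x y : Fin 63) : Fin 63 := Fin.ofNat 63 (((x + 1 : ℕ) ^^^ (y + 1)) - 1)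

theorem thirdPoint_spec : ∀ x y, hexagon.Adj x y →
    (hexagon.Adj x (thirdPoint x y) ∧ hexagon.Adj y (thirdPoint x y)) ∧
      ∀ u, hexagon.Adj x u ∧ hexagon.Adj y u → u = thirdPoint x y := by
  decide +kernel

theorem isTriangular_hexagon : IsTriangular hexagon := fun x y hxy =>
  ⟨thirdPoint x y, thirdPoint_spec x y hxy⟩

theorem card_filter_hexagon_adj : ∀ x, (Finset.univ.filter (hexagon.Adj x)).card = 6 := by
  decide +kernel

/-- A certificate that every vertex is determined by the vertices in `S`: each triple `(z, x, y)` of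
`c` adds to `S` the only common neighbour `z` of two of its elements `x` and `y`. -/
def Determines {V : Type*} (Γ : SimpleGraph V) (S : List V) : List (V × V × V) → Prop
  | [] => ∀ x, x ∈ S
  | (z, x, y) :: c => x ∈ S ∧ y ∈ S ∧ (Γ.Adj x z ∧ Γ.Adj y z) ∧
      (∀ u, Γ.Adj x u → Γ.Adj y u → u = z) ∧ Determines Γ (z :: S) c

instance decidableDetermines {V : Type*} [Fintype V] [DecidableEq V] (Γ : SimpleGraph V)
    [DecidableRel Γ.Adj] : ∀ S c, Decidable (Determines Γ S c)
  | S, [] => inferInstanceAs (Decidable (∀ x, x ∈ S))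
  | S, (z, x, y) :: c =>
    have := decidableDetermines Γ (z :: S) c
    inferInstanceAs (Decidable (x ∈ S ∧ y ∈ S ∧ (Γ.Adj x z ∧ Γ.Adj y z) ∧
      (∀ u, Γ.Adj x u → Γ.Adj y u → u = z) ∧ Determines Γ (z :: S) c))

theorem Determines.apply_eq {V : Type*} {Γ : SimpleGraph V} {S : List V} {c : List (V × V × V)}
    (hc : Determines Γ S c) (σ : Γ ≃g Γ) (hσ : ∀ x ∈ S, σ x = x) (x : V) : σ x = x := by
  induction c generalizing S with
  | nil => exact hσ x (hc x)
  | cons t c ih =>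
    obtain ⟨z, x, y⟩ := t
    obtain ⟨hx, hy, ⟨hxz, hyz⟩, huniq, hc⟩ := hc
    refine ih hc (List.forall_mem_cons.2 ⟨huniq _ ?_ ?_, hσ⟩)
    · rw [← hσ x hx, σ.map_adj_iff]
      exact hxz
    · rw [← hσ y hy, σ.map_adj_iff]
      exact hyz

/-- Reconstruction of the hexagon from the points of a broken line of length four. -/
def hexagonCertificate : List (Fin 63 × Fin 63 × Fin 63) :=
  [(11, 7, 3), (9, 7, 1), (19, 3, 15), (16, 15, 0), (31, 0, 1), (32, 0, 31), (33, 1, 31),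
   (35, 9, 16), (17, 11, 32), (45, 9, 35), (8, 19, 33), (52, 16, 35), (29, 11, 17), (25, 11, 52),
   (24, 19, 45), (28, 19, 8), (50, 32, 17), (18, 32, 45), (42, 33, 8), (10, 33, 52), (62, 35, 17),
   (27, 3, 18), (21, 11, 25), (37, 9, 28), (43, 9, 50), (12, 19, 24), (36, 16, 29), (51, 16, 42),
   (34, 31, 25), (49, 32, 28), (40, 33, 29), (26, 35, 62), (44, 17, 62), (54, 45, 29), (60, 45, 18),
   (53, 8, 62), (46, 52, 25), (61, 52, 50), (58, 29, 28), (30, 50, 42), (13, 7, 51), (5, 7, 53),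
   (23, 3, 27), (20, 15, 43), (4, 15, 44), (48, 0, 21), (47, 0, 54), (41, 1, 12), (39, 1, 44),
   (2, 31, 34), (56, 25, 43), (57, 24, 51), (14, 18, 27), (22, 10, 27), (38, 21, 12), (59, 49, 40),
   (6, 54, 46), (55, 60, 61)]

theorem determines_hexagon : Determines hexagon [1, 7, 3, 15, 0] hexagonCertificate := by
  decide +kernel

theorem eq_three_or_one_or_five_of_hexagon_adj : ∀ x, hexagon.Adj 7 x → ∀ y, hexagon.Adj x y →
    hexagon.Adj y 0 → x = 3 ∨ x = 1 ∨ x = 5 := by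
  decide +kernel

end Hexagon

section HexagonCard

variable {V G : Type*} {Γ : SimpleGraph V}

theorem IsTriangular.of_iso {W : Type*} {Δ : SimpleGraph W} (hΔ : IsTriangular Δ) (φ : Γ ≃g Δ) :
    IsTriangular Γ := by
  intro x y hxy
  obtain ⟨z, hz, huniq⟩ := hΔ (φ.map_adj_iff.2 hxy)
  refine ⟨φ.symm z, ?_, fun u hu => ?_⟩
  · simpa only [← φ.map_adj_iff, φ.apply_symm_apply] using hz
  · rw [← huniq (φ u) (by simpa only [φ.map_adj_iff] using hu), φ.symm_apply_apply]

theorem ncard_extensions_singleton_of_iso (φ : Γ ≃g hexagon) (x : V) :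
    (extensions Γ [x]).ncard = 6 := by
  have himage : φ '' extensions Γ [x] = Finset.univ.filter (hexagon.Adj (φ x)) := by
    ext y
    obtain ⟨y, rfl⟩ := φ.surjective y
    simp [extensions, φ.map_adj_iff]
  rw [← Set.ncard_image_of_injective _ φ.injective, himage, Set.ncard_coe_finset,
    card_filter_hexagon_adj]

variable [Group G] [MulAction G V]

/-- The automorphism of a graph isomorphic to `Γ` by which an element of `G` acts. -/
def ActsOn.conj {W : Type*} {Δ : SimpleGraph W} (hG : ActsOn G Γ) (φ : Γ ≃g Δ) (g : G) : Δ ≃g Δ :=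
  (φ.symm.trans ⟨MulAction.toPerm g, hG g _ _⟩).trans φ

theorem ActsOn.conj_apply_eq_iff {W : Type*} {Δ : SimpleGraph W} (hG : ActsOn G Γ) (φ : Γ ≃g Δ)
    (g : G) (x y : W) : hG.conj φ g x = y ↔ g • φ.symm x = φ.symm y :=
  φ.toEquiv.eq_symm_apply.symm

theorem card_fixingSubgroup_hexagon_arc [FaithfulSMul G V] (hG : ActsOn G Γ) (φ : Γ ≃g hexagon)
    (hne : fixingSubgroup G {x | x ∈ [7, 3, 15, 0].map φ.symm} ≠ ⊥) :
    Nat.card (fixingSubgroup G {x | x ∈ [7, 3, 15, 0].map φ.symm}) = 2 := by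
  refine card_fixingSubgroup_eq_two (e := φ.symm 1) (f := φ.symm 5)
    (fun g hg => ?_) (fun g hg => ?_) hne
  · simp only [mem_fixingSubgroup_iff, List.map_cons, List.map_nil, List.mem_cons,
      List.not_mem_nil, or_false, Set.mem_ofPred_eq, forall_eq_or_imp, forall_eq,
      ← hG.conj_apply_eq_iff φ] at hg ⊢
    generalize hG.conj φ g = σ at hg ⊢
    obtain ⟨h₇, h₃, -, h₀⟩ := hg
    have h₇₁ : hexagon.Adj 7 (σ 1) := by rw [← h₇, σ.map_adj_iff]; decide +kernel
    have h₁₃₁ : hexagon.Adj (σ 1) (σ 31) := by rw [σ.map_adj_iff]; decide +kernel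
    have h₃₁₀ : hexagon.Adj (σ 31) 0 := by rw [← h₀, σ.map_adj_iff]; decide +kernel
    refine (eq_three_or_one_or_five_of_hexagon_adj _ h₇₁ _ h₁₃₁ h₃₁₀).resolve_left fun h => ?_
    exact absurd (σ.injective (h.trans h₃.symm)) (by decide)
  · refine FaithfulSMul.eq_of_smul_eq_smul (α := V) fun v => ?_
    rw [← φ.symm_apply_apply v, one_smul, ← hG.conj_apply_eq_iff]
    refine determines_hexagon.apply_eq _ (fun x hx => (hG.conj_apply_eq_iff φ g x x).2 ?_) _
    exact (mem_fixingSubgroup_iff _).1 hg _ (List.mem_map_of_mem (f := φ.symm) hx)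

theorem card_eq_of_iso_hexagon [Finite G] [FaithfulSMul G V] (hG : ActsOn G Γ)
    (φ : Γ ≃g hexagon) (htrans : IsArcTransitive G Γ 1) {b c c₁ c₂ d d₁ d₂ d₃ : V}
    (hpoint : HasJump G Γ 3 [b]) (hswap : HasSwap G Γ [c, c₁, c₂])
    (hjump : HasJump G Γ 2 [d, d₁, d₂, d₃]) : Nat.card G = 12096 := by
  have : Finite V := Finite.of_equiv _ φ.symm.toEquiv
  have hΓ : IsTriangular Γ := isTriangular_hexagon.of_iso φ
  have hdeg := ncard_extensions_singleton_of_iso φ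
  obtain ⟨htrans₂, htrans₃, htrans₄⟩ :=
    isArcTransitive_two_three_four hΓ hG hdeg htrans hpoint hswap hjump
  have harc : IsArc Γ ([7, 3, 15, 0].map φ.symm) := by
    simp only [List.map_cons, List.map_nil, IsArc, extensions, Set.mem_ofPred_eq, Set.mem_univ,
      φ.symm.map_adj_iff, φ.symm.injective.ne_iff]
    decide +kernel
  have hne : fixingSubgroup G {x | x ∈ [7, 3, 15, 0].map φ.symm} ≠ ⊥ := by
    obtain ⟨hl, h, hh, e, -, hmove⟩ := hjump
    obtain ⟨g, hg⟩ := htrans₄ hl harc rfl rfl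
    refine Subgroup.ne_bot_iff_exists_ne_one.2 ⟨⟨g * h * g⁻¹, map_smul_eq_self_iff.1
      (map_mul_smul (map_inv_smul hg) (map_mul_smul hh hg))⟩, fun h1 => ?_⟩
    have h1 : h = 1 := by simpa [mul_inv_eq_one] using congrArg Subtype.val h1
    exact (hmove 1 one_pos one_lt_two).1 (by simp [h1])
  have hV : Nat.card V = 63 := by rw [Nat.card_congr φ.toEquiv, Nat.card_fin]
  rw [card_eq_mul_card_fixingSubgroup hΓ hG hdeg htrans htrans₂ htrans₃ htrans₄ harc, hV]
  exact congrArg (fun n => 63 * (6 * (4 * (4 * n)))) (card_fixingSubgroup_hexagon_arc hG φ hne)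

end HexagonCard

section Frobenius

/-- `K` is the field of rational functions over `ℚ` in the variable `w`. -/
structure IsRatFuncGenerator {K : Type*} [Field K] (w : K) : Prop where
  transcendental : Transcendental ℤ w
  closure_eq_top : Subfield.closure {w} = ⊤

/-- A reduction of the extension `L / K` at `w = w₀` and at a prime `p`: a ring homomorphism to an
algebraic closure of `𝔽ₚ` from an integrally closed subring of `L`, with a Frobenius automorphism.
-/
structure FrobeniusReduction (K L : Type*) [Field K] [Field L] [Algebra K L] (w : K) (p : ℕ)
    [Fact p.Prime] (w₀ : ZMod p) where
  /-- The subring of `L` on which the reduction is defined. -/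
  ring : Subring L
  /-- The reduction map. -/
  red : ring →+* AlgebraicClosure (ZMod p)
  /-- An automorphism that acts as `x ↦ x ^ p` on reductions. -/
  frob : L ≃ₐ[K] L
  mem_of_isIntegral : ∀ x : L, IsIntegral ring x → x ∈ ring
  algebraMap_mem : algebraMap K L w ∈ ring
  red_algebraMap : red ⟨algebraMap K L w, algebraMap_mem⟩ = algebraMap _ _ w₀
  red_of_eq_frob : ∀ x y : ring, (y : L) = frob x → red y = red x ^ p

variable {K L : Type*} [Field K] [Field L] [Algebra K L] [FiniteDimensional K L] [IsGalois K L]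
  {p : ℕ} [Fact p.Prime]

theorem exists_ideal_integralClosure_over_ker {R : Type*} [CommRing R] [IsDomain R] [Algebra R L]
    [FaithfulSMul R L] (ψ : R →+* ZMod p) :
    ∃ Q : Ideal (integralClosure R L), Q.IsMaximal ∧ Q.under R = RingHom.ker ψ := by
  have hψ : (RingHom.ker ψ).IsMaximal :=
    RingHom.ker_isMaximal_of_surjective ψ (ZMod.ringHom_surjective ψ)
  have hinj : Function.Injective (algebraMap R (integralClosure R L)) := fun a b h =>
    FaithfulSMul.algebraMap_injective R L (congrArg Subtype.val h)
  refine Ideal.exists_ideal_over_maximal_of_isIntegral (RingHom.ker ψ) ?_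
  rw [(RingHom.injective_iff_ker_eq_bot _).1 hinj]
  exact bot_le

theorem exists_frobenius_of_under_eq_ker {R : Type*} [CommRing R] [IsDomain R]
    [IsIntegrallyClosed R] [IsNoetherianRing R] [Algebra R K] [IsFractionRing R K] [Algebra R L]
    [IsScalarTower R K L] (ψ : R →+* ZMod p) (Q : Ideal (integralClosure R L)) [Q.IsMaximal]
    (hQ : Q.under R = RingHom.ker ψ) :
    Finite (integralClosure R L ⧸ Q) ∧ ∃ σ : L ≃ₐ[K] L, ∀ x y : integralClosure R L,
      (y : L) = σ x → Ideal.Quotient.mk Q y = Ideal.Quotient.mk Q x ^ p := by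
  let _ := IsIntegralClosure.MulSemiringAction R K L (integralClosure R L)
  have := integralClosure.isFractionRing_of_finite_extension (A := R) K L
  have := Algebra.isInvariant_of_isGalois R K L (integralClosure R L)
  have := IsIntegralClosure.finite R K L (integralClosure R L)
  have hψ := ZMod.ringHom_surjective ψ
  have : (RingHom.ker ψ).IsMaximal := RingHom.ker_isMaximal_of_surjective ψ hψ
  let e : R ⧸ RingHom.ker ψ ≃+* ZMod p := RingHom.quotientKerEquivOfSurjective hψ
  have hcard : Nat.card (R ⧸ Q.under R) = p := by
    rw [hQ, Nat.card_congr e.toEquiv, Nat.card_zmod]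
  have : Q.LiesOver (RingHom.ker ψ) := ⟨hQ.symm⟩
  have : Finite (R ⧸ RingHom.ker ψ) := Finite.of_equiv _ e.symm.toEquiv
  have : Finite (integralClosure R L ⧸ Q) := Module.finite_of_finite (R ⧸ RingHom.ker ψ)
  have : SMulCommClass (L ≃ₐ[K] L) R (integralClosure R L) :=
    ⟨fun σ a x => map_smul (galRestrict R K L (integralClosure R L) σ) a x⟩
  obtain ⟨σ, hσ⟩ := IsArithFrobAt.exists_of_isInvariant R (L ≃ₐ[K] L) Q
  refine ⟨inferInstance, σ, fun x y hxy => ?_⟩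
  have hy : y = σ • x := Subtype.ext (hxy.trans (algebraMap_galRestrict_apply R σ x).symm)
  rw [hy, ← map_pow, Ideal.Quotient.eq, ← hcard]
  exact hσ x

theorem nonempty_ringHom_algebraicClosure_zmod (k : Type*) [Field k] [Finite k] [CharP k p] :
    Nonempty (k →+* AlgebraicClosure (ZMod p)) := by
  let _ := ZMod.algebra k p
  exact ⟨(IsAlgClosed.lift : k →ₐ[ZMod p] AlgebraicClosure (ZMod p)).toRingHom⟩

theorem exists_frobenius {R : Type*} [CommRing R] [IsDomain R] [IsIntegrallyClosed R]
    [IsNoetherianRing R] [Algebra R K] [IsFractionRing R K] [Algebra R L] [IsScalarTower R K L]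
    (ψ : R →+* ZMod p) :
    ∃ (σ : L ≃ₐ[K] L) (φ : integralClosure R L →+* AlgebraicClosure (ZMod p)),
      (∀ a, φ (algebraMap _ _ a) = algebraMap _ _ (ψ a)) ∧
      ∀ x y : integralClosure R L, (y : L) = σ x → φ y = φ x ^ p := by
  have : FaithfulSMul R L := (faithfulSMul_iff_algebraMap_injective R L).2 <| by
    rw [IsScalarTower.algebraMap_eq R K L]
    exact (algebraMap K L).injective.comp (IsFractionRing.injective R K)
  obtain ⟨Q, hQmax, hQ⟩ := exists_ideal_integralClosure_over_ker (L := L) ψ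
  obtain ⟨hfinite, σ, hσ⟩ := exists_frobenius_of_under_eq_ker (K := K) ψ Q hQ
  let _ := Ideal.Quotient.field Q
  have hψ : ∀ a, ψ a = 0 → Ideal.Quotient.mk Q (algebraMap R _ a) = 0 := fun a ha =>
    Ideal.Quotient.eq_zero_iff_mem.2 (show a ∈ Q.under R from hQ ▸ ha)
  have : CharP (integralClosure R L ⧸ Q) p :=
    (CharP.charP_iff_prime_eq_zero (Fact.out : p.Prime)).2 <| by
      simpa only [map_natCast] using hψ p (by rw [map_natCast, CharP.cast_eq_zero])
  obtain ⟨ι⟩ := nonempty_ringHom_algebraicClosure_zmod (p := p) (integralClosure R L ⧸ Q)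
  refine ⟨σ, ι.comp (Ideal.Quotient.mk Q), fun a => ?_, fun x y hxy => ?_⟩
  · obtain ⟨n, hn⟩ := ZMod.intCast_surjective (ψ a)
    have ha := hψ (a - n) (by rw [map_sub, map_intCast, hn, sub_self])
    rw [map_sub, map_sub, sub_eq_zero, map_intCast, map_intCast] at ha
    rw [RingHom.comp_apply, ha, ← hn, map_intCast, map_intCast]
  · rw [RingHom.comp_apply, RingHom.comp_apply, hσ x y hxy, map_pow]

theorem IsRatFuncGenerator.isFractionRing {w : K} (hw : IsRatFuncGenerator w) :
    letI := (aeval (R := ℤ) w).toAlgebra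
    IsFractionRing ℤ[X] K := by
  let _ := (aeval (R := ℤ) w).toAlgebra
  have hinj : Function.Injective (algebraMap ℤ[X] K) :=
    transcendental_iff_injective.1 hw.transcendental
  have := (faithfulSMul_iff_algebraMap_injective ℤ[X] K).2 hinj
  let f : FractionRing ℤ[X] →+* K := IsFractionRing.lift hinj
  have hf (a : ℤ[X]) : f (algebraMap _ _ a) = algebraMap _ K a :=
    IsFractionRing.lift_algebraMap hinj a
  have htop : f.fieldRange = ⊤ := top_le_iff.1 <| by
    rw [← hw.closure_eq_top, Subfield.closure_le, Set.singleton_subset_iff]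
    exact ⟨algebraMap _ _ X, (hf X).trans (aeval_X w)⟩
  refine IsFractionRing.of_field ℤ[X] K fun z => ?_
  obtain ⟨y, rfl⟩ : z ∈ f.fieldRange := htop ▸ Subfield.mem_top z
  obtain ⟨a, b, -, rfl⟩ := IsFractionRing.div_surjective (A := ℤ[X]) y
  exact ⟨a, b, by rw [map_div₀, hf, hf]⟩

theorem IsRatFuncGenerator.nonempty_frobeniusReduction {w : K} (hw : IsRatFuncGenerator w)
    (w₀ : ZMod p) : Nonempty (FrobeniusReduction K L w p w₀) := by
  let _ := (aeval (R := ℤ) w).toAlgebra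
  have := hw.isFractionRing
  let _ : Algebra ℤ[X] L := ((algebraMap K L).comp (algebraMap ℤ[X] K)).toAlgebra
  have : IsScalarTower ℤ[X] K L := IsScalarTower.of_algebraMap_eq fun _ => rfl
  obtain ⟨σ, φ, hφ, hσ⟩ := exists_frobenius (K := K) (L := L) (eval₂RingHom (Int.castRingHom _) w₀)
  have hX : algebraMap ℤ[X] L X = algebraMap K L w := congrArg (algebraMap K L) (aeval_X w)
  refine ⟨⟨(integralClosure ℤ[X] L).toSubring, φ, σ, fun x hx => ?_, ?_, ?_, hσ⟩⟩
  · exact isIntegral_trans (A := integralClosure ℤ[X] L) x hx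
  · rw [← hX]
    exact (algebraMap ℤ[X] (integralClosure ℤ[X] L) X).2
  · have hred := hφ X
    rw [coe_eval₂RingHom, eval₂_X] at hred
    rw [← hred]
    exact congrArg φ (Subtype.ext hX.symm)

end Frobenius

section CoefficientLists

/-- Polynomials as lists of coefficients, by increasing degree. Unlike `Polynomial`, their
arithmetic can be evaluated by the kernel; polynomials in two variables are lists of lists. -/
abbrev CoeffList (α : Type*) := List α

namespace CoeffList

variable {α S : Type*}

/-- Coefficientwise addition. -/
def add [Add α] : CoeffList α → CoeffList α → CoeffList α
  | [], m => m
  | l, [] => l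
  | a :: l, b :: m => (a + b) :: add l m

instance : Zero (CoeffList α) := ⟨[]⟩

-- The priorities override the instances that `omega` uses for lists of integers.
instance (priority := high) [Add α] : Add (CoeffList α) := ⟨add⟩

/-- The product of polynomials. -/
def mul [Zero α] [Add α] [Mul α] : CoeffList α → CoeffList α → CoeffList α
  | [], _ => 0
  | a :: l, m => m.map (a * ·) + (0 :: mul l m)

instance (priority := high) [Zero α] [Add α] [Mul α] : Mul (CoeffList α) := ⟨mul⟩

/-- Iterated multiplication. -/
def pow [Zero α] [One α] [Add α] [Mul α] (l : CoeffList α) : ℕ → CoeffList α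
  | 0 => [1]
  | n + 1 => l * pow l n

instance [Zero α] [One α] [Add α] [Mul α] : Pow (CoeffList α) ℕ := ⟨pow⟩

/-- The value at `x` of the polynomial whose coefficients are mapped to `S` by `f`. -/
def evalMap [Zero S] [Add S] [Mul S] (f : α → S) (x : S) (l : CoeffList α) : S :=
  List.foldr (fun a s => f a + x * s) 0 l

/-- `f` is compatible with the arithmetic operations; coefficient lists do not form a semiring,
since zeros at the end of a list are significant. -/
structure IsArithHom [Zero α] [Add α] [Mul α] [CommRing S] (f : α → S) : Prop where
  map_zero : f 0 = 0
  map_add : ∀ a b, f (a + b) = f a + f b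
  map_mul : ∀ a b, f (a * b) = f a * f b

theorem isArithHom_intCast [CommRing S] : IsArithHom (Int.cast : ℤ → S) :=
  ⟨Int.cast_zero, Int.cast_add, Int.cast_mul⟩

section Eval

variable [CommRing S] {f : α → S} {x : S}

theorem evalMap_nil : evalMap f x [] = 0 := rfl

theorem evalMap_cons (a : α) (l : CoeffList α) :
    evalMap f x (a :: l) = f a + x * evalMap f x l := rfl

variable [Zero α] [Add α] [Mul α]

theorem evalMap_add (hf : IsArithHom f) : ∀ l m : CoeffList α,
    evalMap f x (l + m) = evalMap f x l + evalMap f x m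
  | [], m => (zero_add _).symm
  | _ :: _, [] => (add_zero _).symm
  | a :: l, b :: m => by
    change f (a + b) + x * evalMap f x (l + m : CoeffList α) = _
    rw [evalMap_add hf l m, hf.map_add, evalMap_cons, evalMap_cons]
    ring

theorem evalMap_map_mul (hf : IsArithHom f) (a : α) (l : CoeffList α) :
    evalMap f x (l.map (a * ·)) = f a * evalMap f x l := by
  induction l with
  | nil => exact (mul_zero _).symm
  | cons b l ih =>
    rw [List.map_cons, evalMap_cons, evalMap_cons, ih, hf.map_mul]
    ring

theorem evalMap_mul (hf : IsArithHom f) : ∀ l m : CoeffList α,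
    evalMap f x (l * m) = evalMap f x l * evalMap f x m
  | [], m => (zero_mul _).symm
  | a :: l, m => by
    change evalMap f x (m.map (a * ·) + (0 :: (l * m))) = _
    rw [evalMap_add hf, evalMap_map_mul hf, evalMap_cons, evalMap_mul hf l m, hf.map_zero,
      evalMap_cons]
    ring

theorem isArithHom_evalMap (hf : IsArithHom f) : IsArithHom (evalMap f x) :=
  ⟨rfl, evalMap_add hf, evalMap_mul hf⟩

theorem evalMap_pow [One α] (hf : IsArithHom f) (hone : f 1 = 1) (l : CoeffList α) (n : ℕ) :
    evalMap f x (l ^ n) = evalMap f x l ^ n := by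
  induction n with
  | zero =>
    change f 1 + x * 0 = _
    rw [hone, mul_zero, add_zero, pow_zero]
  | succ n ih =>
    change evalMap f x (l * l ^ n) = _
    rw [evalMap_mul hf, ih, pow_succ']

end Eval

theorem map_evalMap {R : Type*} [CommRing R] [CommRing S] (φ : R →+* S) (f : α → R) (x : R)
    (l : CoeffList α) : φ (evalMap f x l) = evalMap (φ ∘ f) (φ x) l := by
  induction l with
  | nil => exact map_zero φ
  | cons a l ih => exact (map_add φ _ _).trans (congrArg _ ((map_mul φ _ _).trans (ih ▸ rfl)))

section Bivariate

variable [CommRing S]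

/-- The value at `(x, y)` of a polynomial in two variables, listed by increasing powers of `y`. -/
def evalPair (x y : S) (l : CoeffList (CoeffList ℤ)) : S :=
  evalMap (evalMap Int.cast x) y l

theorem evalPair_add (x y : S) (l m : CoeffList (CoeffList ℤ)) :
    evalPair x y (l + m) = evalPair x y l + evalPair x y m :=
  evalMap_add (isArithHom_evalMap isArithHom_intCast) l m

theorem evalPair_mul (x y : S) (l m : CoeffList (CoeffList ℤ)) :
    evalPair x y (l * m) = evalPair x y l * evalPair x y m :=
  evalMap_mul (isArithHom_evalMap isArithHom_intCast) l m

theorem map_evalPair {R : Type*} [CommRing R] (φ : R →+* S) (x y : R)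
    (l : CoeffList (CoeffList ℤ)) : φ (evalPair x y l) = evalPair (φ x) (φ y) l := by
  have hcast : (φ ∘ Int.cast : ℤ → S) = Int.cast := funext (map_intCast φ)
  have hinner : φ ∘ evalMap Int.cast x = evalMap Int.cast (φ x) :=
    funext fun l => by rw [Function.comp_apply, map_evalMap, hcast]
  rw [evalPair, map_evalMap, hinner, evalPair]

/-- A polynomial in `x`, viewed as a polynomial in two variables. -/
def inX (l : CoeffList ℤ) : CoeffList (CoeffList ℤ) := [l]

/-- A polynomial in `y`, viewed as a polynomial in two variables. -/
def inY (l : CoeffList ℤ) : CoeffList (CoeffList ℤ) := l.map fun a => [a]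

theorem evalPair_inX (x y : S) (l : CoeffList ℤ) : evalPair x y (inX l) = evalMap Int.cast x l :=
  (evalMap_cons _ _).trans (by rw [evalMap_nil, mul_zero, add_zero])

theorem evalPair_inY (x y : S) (l : CoeffList ℤ) : evalPair x y (inY l) = evalMap Int.cast y l := by
  induction l with
  | nil => rfl
  | cons a l ih =>
    rw [inY, List.map_cons, evalPair, evalMap_cons, ← evalPair, ← inY, ih, evalMap_cons,
      evalMap_cons, evalMap_nil, mul_zero, add_zero]

/-- Interchange of the two variables. -/
def transpose : CoeffList (CoeffList ℤ) → CoeffList (CoeffList ℤ)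
  | [] => 0
  | a :: l => inY a + (transpose l).map fun m => 0 :: m

theorem evalPair_transpose (x y : S) : ∀ l : CoeffList (CoeffList ℤ),
    evalPair x y (transpose l) = evalPair y x l
  | [] => rfl
  | a :: l => by
    have hshift : ∀ m : CoeffList (CoeffList ℤ),
        evalPair x y (m.map fun m => 0 :: m) = x * evalPair x y m := by
      intro m
      induction m with
      | nil => exact (mul_zero x).symm
      | cons c m ih =>
        rw [List.map_cons, evalPair, evalMap_cons, ← evalPair, ih, evalMap_cons, Int.cast_zero,
          evalPair, evalPair, evalMap_cons]
        ring
    rw [transpose, evalPair_add, evalPair_inY, hshift, evalPair_transpose x y l, evalPair,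
      evalPair, evalMap_cons]

theorem evalPair_eq_zero (x y : S) {l : CoeffList (CoeffList ℤ)} (hl : ∀ m ∈ l, ∀ a ∈ m, a = 0) :
    evalPair x y l = 0 := by
  have hzero : ∀ {α : Type} {f : α → S} {z : S} {m : List α}, (∀ a ∈ m, f a = 0) →
      evalMap f z m = 0 := by
    intro α f z m hm
    induction m with
    | nil => rfl
    | cons a m ih =>
      rw [List.forall_mem_cons] at hm
      rw [evalMap_cons, hm.1, ih hm.2, mul_zero, add_zero]
  exact hzero fun m hm => hzero fun a ha => by rw [hl m hm a ha, Int.cast_zero]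

end Bivariate

end CoeffList

end CoefficientLists

section Incidence

open CoeffList

/-- The coefficients of `q`. -/
@[irreducible] def qCoeffs : CoeffList ℤ :=
  [6, 27, 30, 1] * [-62, -75, 144, 169, 93, 18, 1] ^ 2 *
    [36, -108, 117, 1047, -1215, -2496, 2002, 4002, -2766, -332, -15, 15, 1] ^ 4

/-- The coefficients of the seventh power `r / -136048896`. -/
@[irreducible] def gCoeffs : CoeffList ℤ :=
  [2, -1, 1] ^ 7 * [-1, -1, 2, 1] ^ 7 * [-1, -1, 9, 1] ^ 7

/-- The symmetric polynomial `A(x, y)` of bidegree `(6, 6)` that vanishes when the roots `x` and `y`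
of `F` are collinear. It is a factor of `q(x) g(y) - q(y) g(x)`, where `r = -136048896 g`. -/
def incidenceCoeffs : CoeffList (CoeffList ℤ) :=
  [[69, 12, -109, 34, 33, 10, -1],
   [12, -424, -71, 173, -95, -1, -2],
   [-109, -71, 1762, 10, -267, 33, 10],
   [34, 173, 10, -2493, 215, 136, 13],
   [33, -95, -267, 215, 1074, -8, -16],
   [10, -1, 33, 136, -8, -135, -11],
   [-1, -2, 10, 13, -16, -11, -1]]

/-- The coefficients of `q(x) g(y) - q(y) g(x)`. -/
def crossCoeffs : CoeffList (CoeffList ℤ) :=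
  inX qCoeffs * inY gCoeffs + [[-1]] * (inY qCoeffs * inX gCoeffs)

/-- The first digits of an integer in base `b`, where digits may be negative. -/
def balancedDigits (b : ℕ) : ℕ → ℤ → List ℤ
  | 0, _ => []
  | k + 1, n => n.bmod b :: balancedDigits b k ((n - n.bmod b) / b)

/-- The first blocks of length `m` of a list. -/
def blocks (m : ℕ) : ℕ → List ℤ → List (List ℤ)
  | 0, _ => []
  | k + 1, l => l.take m :: blocks m k (l.drop m)

/-- The quotient of `q(x) g(y) - q(y) g(x)` by `A(x, y)`, a polynomial of bidegree `(57, 57)`. It is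
found by Kronecker substitution: since `2 ^ 128` exceeds twice the absolute value of each of its
coefficients, these are the digits of its value at `x = 2 ^ 128` and `y = x ^ 58`. -/
def quotientCoeffs : CoeffList (CoeffList ℤ) :=
  let x : ℤ := 2 ^ 128
  let y : ℤ := x ^ 58
  blocks 58 58 <| balancedDigits (2 ^ 128) (58 * 58) <|
    evalPair x y crossCoeffs / evalPair x y incidenceCoeffs

theorem transpose_incidenceCoeffs : transpose incidenceCoeffs = incidenceCoeffs := by
  decide +kernel

set_option maxRecDepth 100000 in
theorem incidenceCoeffs_mul_quotientCoeffs_sub :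
    ∀ m ∈ incidenceCoeffs * quotientCoeffs + [[-1]] * crossCoeffs, ∀ a ∈ m, a = 0 := by
  decide +kernel

variable {S : Type*} [CommRing S]

/-- The value `A(x, y)` of the incidence polynomial. -/
def incidence (x y : S) : S := evalPair x y incidenceCoeffs

theorem incidence_comm (x y : S) : incidence x y = incidence y x := by
  rw [incidence, ← transpose_incidenceCoeffs, evalPair_transpose, incidence]

theorem map_incidence {R : Type*} [CommRing R] (φ : R →+* S) (x y : R) :
    φ (incidence x y) = incidence (φ x) (φ y) :=
  map_evalPair φ x y incidenceCoeffs

theorem incidence_dvd (x y : S) :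
    incidence x y ∣ evalMap Int.cast x qCoeffs * evalMap Int.cast y gCoeffs -
      evalMap Int.cast y qCoeffs * evalMap Int.cast x gCoeffs := by
  have hneg : evalPair x y [[-1]] = -1 := by simp [evalPair, evalMap]
  have hcancel := evalPair_eq_zero x y incidenceCoeffs_mul_quotientCoeffs_sub
  simp only [crossCoeffs, evalPair_add, evalPair_mul, hneg, evalPair_inX, evalPair_inY] at hcancel
  refine ⟨evalPair x y quotientCoeffs, ?_⟩
  rw [incidence]
  linear_combination -hcancel

end Incidence

section Lifting

variable {A k : Type*} [CommRing A] [Field k]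

theorem exists_root_map_eq {L : Type*} [Field L] {ι : A →+* L} (hι : Function.Injective ι)
    (φ : A →+* k) {P : A[X]} (hsplits : (P.map ι).Splits)
    (hroots : ∀ u ∈ (P.map ι).roots, ∃ a, ι a = u) {y : k} (hne : P.map φ ≠ 0)
    (hy : (P.map φ).eval y = 0) : ∃ a, P.eval a = 0 ∧ φ a = y := by
  choose! lift hlift using hroots
  let s := (P.map ι).roots.map lift
  have hs : s.map ι = (P.map ι).roots := by
    rw [Multiset.map_map]
    exact (Multiset.map_congr rfl hlift).trans (Multiset.map_id _)
  have hP : P = C P.leadingCoeff * (s.map (X - C ·)).prod := by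
    apply map_injective ι hι
    rw [Polynomial.map_mul, map_C, ← leadingCoeff_map_of_injective hι, Polynomial.map_multiset_prod,
      Multiset.map_map]
    simpa [← hs, Multiset.map_map, Function.comp_def] using hsplits.eq_prod_roots
  have hlead : φ P.leadingCoeff ≠ 0 := fun h => hne (by
    rw [hP, Polynomial.map_mul, map_C, h, C_0, zero_mul])
  rw [hP, Polynomial.map_mul, map_C, eval_mul, eval_C, Polynomial.map_multiset_prod,
    eval_multiset_prod, mul_eq_zero, or_iff_right hlead, Multiset.prod_eq_zero_iff] at hy
  simp only [Multiset.mem_map, exists_exists_and_eq_and, Polynomial.map_sub, map_X, map_C, eval_sub,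
    eval_X, eval_C] at hy
  obtain ⟨a, ha, hya⟩ := hy
  refine ⟨a, ?_, (sub_eq_zero.1 hya).symm⟩
  rw [hP, eval_mul, eval_multiset_prod, Multiset.prod_eq_zero, mul_zero]
  simpa using ⟨a, ha, sub_self a⟩

theorem eq_of_map_eq_of_derivative_ne_zero [IsDomain A] (φ : A →+* k) {P : A[X]} {a b : A}
    (ha : P.eval a = 0) (hb : P.eval b = 0) (hab : φ a = φ b)
    (hderiv : (derivative (P.map φ)).eval (φ a) ≠ 0) : a = b := by
  obtain ⟨Q, rfl⟩ := dvd_iff_isRoot.2 ha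
  by_contra hne
  have hQ : Q.eval b = 0 := by
    rw [eval_mul, eval_sub, eval_X, eval_C] at hb
    exact (mul_eq_zero.1 hb).resolve_left (sub_ne_zero.2 (Ne.symm hne))
  apply hderiv
  rw [Polynomial.map_mul, derivative_mul, eval_add, eval_mul, eval_mul]
  simp [hab, eval_map, hQ]

end Lifting

section BelyiRoots

open CoeffList

variable {S : Type*} [CommRing S]

theorem coeff_evalMap_X (l : CoeffList ℤ) (n : ℕ) :
    (evalMap Int.cast (X : S[X]) l).coeff n = (l.getD n 0 : ℤ) := by
  induction l generalizing n with
  | nil => rw [evalMap_nil, coeff_zero, List.getD_nil, Int.cast_zero]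
  | cons a l ih =>
    cases n with
    | zero => simp [evalMap_cons]
    | succ n =>
      rw [evalMap_cons, coeff_add, coeff_X_mul, ih, ← C_eq_intCast, coeff_C_succ, zero_add,
        List.getD_cons_succ]

theorem natDegree_evalMap_X_le {l : CoeffList ℤ} {n : ℕ} (hlen : l.length ≤ n + 1) :
    (evalMap Int.cast (X : S[X]) l).natDegree ≤ n :=
  natDegree_le_iff_coeff_eq_zero.2 fun m hm => by
    rw [coeff_evalMap_X, List.getD_eq_default _ _ (hlen.trans hm), Int.cast_zero]

theorem monic_evalMap_X {l : CoeffList ℤ} {n : ℕ} (hlen : l.length ≤ n + 1)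
    (hlead : l.getD n 0 = 1) : (evalMap Int.cast (X : S[X]) l).Monic :=
  monic_of_natDegree_le_of_coeff_eq_one n (natDegree_evalMap_X_le hlen) <| by
    rw [coeff_evalMap_X, hlead, Int.cast_one]

theorem natDegree_evalMap_X [Nontrivial S] {l : CoeffList ℤ} {n : ℕ} (hlen : l.length ≤ n + 1)
    (hlead : l.getD n 0 = 1) : (evalMap Int.cast (X : S[X]) l).natDegree = n :=
  natDegree_eq_of_le_of_coeff_ne_zero (natDegree_evalMap_X_le hlen) <| by
    rw [coeff_evalMap_X, hlead, Int.cast_one]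
    exact one_ne_zero

/-- The monic polynomial `q + w r`, with which `F` is associated when `w = 1 / (1 - t)`. -/
noncomputable def belyiPoly (w : S) : S[X] :=
  evalMap Int.cast X qCoeffs - C (136048896 * w) * evalMap Int.cast X gCoeffs

theorem map_evalMap_intCast {T : Type*} [CommRing T] (φ : S →+* T) (x : S) (l : CoeffList ℤ) :
    φ (evalMap Int.cast x l) = evalMap Int.cast (φ x) l := by
  rw [map_evalMap]
  congr 1
  exact funext (map_intCast φ)

theorem map_evalMap_X {T : Type*} [CommRing T] (φ : S →+* T) (l : CoeffList ℤ) :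
    (evalMap Int.cast (X : S[X]) l).map φ = evalMap Int.cast X l := by
  rw [← coe_mapRingHom, map_evalMap_intCast, coe_mapRingHom, map_X]

theorem eval_evalMap_X (x : S) (l : CoeffList ℤ) :
    (evalMap Int.cast (X : S[X]) l).eval x = evalMap Int.cast x l := by
  rw [← coe_evalRingHom, map_evalMap_intCast, coe_evalRingHom, eval_X]

theorem map_belyiPoly {T : Type*} [CommRing T] (φ : S →+* T) (w : S) :
    (belyiPoly w).map φ = belyiPoly (φ w) := by
  simp only [belyiPoly, Polynomial.map_sub, Polynomial.map_mul, map_C, map_mul,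
    map_ofNat, Polynomial.map_ofNat, map_evalMap_X]

theorem eval_belyiPoly (w x : S) : (belyiPoly w).eval x =
    evalMap Int.cast x qCoeffs - 136048896 * w * evalMap Int.cast x gCoeffs := by
  rw [belyiPoly, eval_sub, eval_mul, eval_C, eval_evalMap_X, eval_evalMap_X]

theorem length_qCoeffs : qCoeffs.length ≤ 64 := by decide +kernel

theorem length_gCoeffs : gCoeffs.length ≤ 57 := by decide +kernel

theorem leadingCoeff_qCoeffs : qCoeffs.getD 63 0 = 1 := by decide +kernel

theorem leadingCoeff_gCoeffs : gCoeffs.getD 56 0 = 1 := by decide +kernel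

theorem natDegree_belyiPoly_tail_le (w : S) :
    (C (136048896 * w) * evalMap Int.cast (X : S[X]) gCoeffs).natDegree ≤ 56 :=
  (natDegree_C_mul_le _ _).trans (natDegree_evalMap_X_le length_gCoeffs)

theorem natDegree_belyiPoly [Nontrivial S] (w : S) : (belyiPoly w).natDegree = 63 := by
  have hq := natDegree_evalMap_X (S := S) length_qCoeffs leadingCoeff_qCoeffs
  have htail := natDegree_belyiPoly_tail_le w
  rw [belyiPoly, natDegree_sub_eq_left_of_natDegree_lt (by lia), hq]

theorem monic_belyiPoly (w : S) : (belyiPoly w).Monic := by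
  nontriviality S
  have hq := natDegree_evalMap_X (S := S) length_qCoeffs leadingCoeff_qCoeffs
  have htail := natDegree_belyiPoly_tail_le w
  exact (monic_evalMap_X length_qCoeffs leadingCoeff_qCoeffs).sub_of_left
    (degree_lt_degree (by lia))

theorem evalMap_gCoeffs_ne_zero {K L : Type*} [Field K] [Field L] [Algebra K L] {w : K}
    (hirr : Irreducible (belyiPoly w)) {v : L} (hv : aeval v (belyiPoly w) = 0) :
    evalMap Int.cast v gCoeffs ≠ 0 := by
  intro hroot
  have hdvd : minpoly K v ∣ evalMap Int.cast X gCoeffs := minpoly.dvd K v <| by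
    rw [← AlgHom.coe_toRingHom, map_evalMap_intCast, AlgHom.coe_toRingHom, aeval_X, hroot]
  rw [← minpoly.eq_of_irreducible_of_monic hirr hv (monic_belyiPoly w)] at hdvd
  have hle := natDegree_le_of_dvd hdvd (monic_evalMap_X length_gCoeffs leadingCoeff_gCoeffs).ne_zero
  rw [natDegree_belyiPoly, natDegree_evalMap_X length_gCoeffs leadingCoeff_gCoeffs] at hle
  lia

theorem map_incidence_C_X {T : Type*} [CommRing T] (φ : S →+* T) (x : S) :
    (incidence (C x) X).map φ = incidence (C (φ x)) X := by
  rw [← coe_mapRingHom, map_incidence, coe_mapRingHom, map_C, map_X]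

theorem eval_incidence_C_X (x y : S) : (incidence (C x) X).eval y = incidence x y := by
  rw [← coe_evalRingHom, map_incidence, coe_evalRingHom, eval_C, eval_X]

theorem incidence_C_X_dvd_belyiPoly {L : Type*} [Field L] {w v : L}
    (hv : (belyiPoly w).eval v = 0) (hg : evalMap Int.cast v gCoeffs ≠ 0) :
    incidence (C v) X ∣ belyiPoly w := by
  have hdvd := incidence_dvd (C v) X
  have hC : ∀ l, evalMap Int.cast (C v) l = C (evalMap Int.cast v l) := fun l =>
    (map_evalMap_intCast C v l).symm
  rw [eval_belyiPoly, sub_eq_zero] at hv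
  rw [hC, hC, hv] at hdvd
  have hfactor : C (136048896 * w * evalMap Int.cast v gCoeffs) * evalMap Int.cast X gCoeffs -
      evalMap Int.cast X qCoeffs * C (evalMap Int.cast v gCoeffs) =
      C (-evalMap Int.cast v gCoeffs) * belyiPoly w := by
    simp only [belyiPoly, map_mul, map_neg]
    ring
  rw [hfactor] at hdvd
  exact (dvd_C_mul (neg_ne_zero.2 hg)).1 hdvd

end BelyiRoots

section Reduction

variable {S : Type*} [CommRing S]

variable (S) in
/-- Two points are adjacent when the incidence polynomial vanishes on them. -/
def incidenceGraph : SimpleGraph S where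
  Adj x y := x ≠ y ∧ incidence x y = 0
  symm := ⟨fun x y h => ⟨h.1.symm, by rw [incidence_comm, h.2]⟩⟩
  loopless := ⟨fun _ h => h.1 rfl⟩

variable {K L : Type*} [Field K] [Field L] [Algebra K L]

variable (L) in
/-- The collinearity graph on the roots in `L` of the polynomial `q + w r`. -/
def rootGraph (w : K) : SimpleGraph ((belyiPoly w).rootSet L) :=
  (incidenceGraph L).induce _

theorem actsOn_rootGraph (w : K) : ActsOn (L ≃ₐ[K] L) (rootGraph L w) := fun σ x y => by
  have hσ : incidence (σ x : L) (σ y) = σ (incidence (x : L) y) :=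
    (map_incidence (σ : L →+* L) x y).symm
  change σ x ≠ σ y ∧ incidence (σ x : L) (σ y) = 0 ↔ (x : L) ≠ y ∧ incidence (x : L) y = 0
  rw [hσ, σ.injective.ne_iff, map_eq_zero_iff σ σ.injective]

theorem mem_rootSet_belyiPoly_iff {w : K} {x : L} :
    x ∈ (belyiPoly w).rootSet L ↔ (belyiPoly (algebraMap K L w)).eval x = 0 := by
  rw [mem_rootSet_of_ne (monic_belyiPoly w).ne_zero, ← eval_map_algebraMap, map_belyiPoly]

variable {p : ℕ} [Fact p.Prime]

/-- Points of an algebraic closure of `𝔽ₚ` at which a root of `q + w r` and its neighbours can be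
recovered from their reductions: simple roots of `q + w₀ r` that are not adjacent to themselves. -/
structure IsGoodPoint (w₀ : ZMod p) (y : AlgebraicClosure (ZMod p)) : Prop where
  eval_eq_zero : (belyiPoly (algebraMap _ (AlgebraicClosure (ZMod p)) w₀)).eval y = 0
  eval_derivative_ne_zero :
    (derivative (belyiPoly (algebraMap _ (AlgebraicClosure (ZMod p)) w₀))).eval y ≠ 0
  incidence_self_ne_zero : incidence y y ≠ 0

namespace FrobeniusReduction

variable {w : K} {w₀ : ZMod p} (R : FrobeniusReduction K L w p w₀)

/-- The element `w` of the domain of the reduction. -/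
def parameter : R.ring := ⟨algebraMap K L w, R.algebraMap_mem⟩

theorem map_subtype_belyiPoly : (belyiPoly R.parameter).map R.ring.subtype =
    belyiPoly (algebraMap K L w) :=
  map_belyiPoly _ _

theorem map_red_belyiPoly : (belyiPoly R.parameter).map R.red =
    belyiPoly (algebraMap _ (AlgebraicClosure (ZMod p)) w₀) := by
  rw [map_belyiPoly, parameter, R.red_algebraMap]

theorem coe_mem_ring (v : (belyiPoly w).rootSet L) : (v : L) ∈ R.ring := by
  refine R.mem_of_isIntegral v ⟨belyiPoly R.parameter, monic_belyiPoly _, ?_⟩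
  rw [← eval_map]
  exact R.map_subtype_belyiPoly ▸ mem_rootSet_belyiPoly_iff.1 v.2

/-- A root as an element of the domain of the reduction. -/
def integralRoot (v : (belyiPoly w).rootSet L) : R.ring := ⟨v, R.coe_mem_ring v⟩

/-- The reduction of a root. -/
noncomputable def redRoot (v : (belyiPoly w).rootSet L) : AlgebraicClosure (ZMod p) :=
  R.red (R.integralRoot v)

theorem eval_integralRoot (v : (belyiPoly w).rootSet L) :
    (belyiPoly R.parameter).eval (R.integralRoot v) = 0 := by
  apply Subtype.val_injective
  have hv := mem_rootSet_belyiPoly_iff.1 v.2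
  rw [← R.map_subtype_belyiPoly] at hv
  exact (eval_map_apply R.ring.subtype (R.integralRoot v)).symm.trans hv

theorem eval_redRoot (v : (belyiPoly w).rootSet L) :
    (belyiPoly (algebraMap _ (AlgebraicClosure (ZMod p)) w₀)).eval (R.redRoot v) = 0 := by
  rw [← R.map_red_belyiPoly, redRoot, eval_map_apply, R.eval_integralRoot, map_zero]

theorem redRoot_frob_smul (v : (belyiPoly w).rootSet L) :
    R.redRoot (R.frob • v) = R.redRoot v ^ p :=
  R.red_of_eq_frob (R.integralRoot v) (R.integralRoot (R.frob • v)) rfl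

theorem incidence_redRoot {u v : (belyiPoly w).rootSet L} (huv : incidence (u : L) v = 0) :
    incidence (R.redRoot u) (R.redRoot v) = 0 := by
  have hring : incidence (R.integralRoot u) (R.integralRoot v) = 0 :=
    Subtype.val_injective ((map_incidence R.ring.subtype _ _).trans huv)
  rw [redRoot, redRoot, ← map_incidence, hring, map_zero]

theorem eq_of_redRoot_eq {u v : (belyiPoly w).rootSet L} (hu : IsGoodPoint w₀ (R.redRoot u))
    (huv : R.redRoot u = R.redRoot v) : u = v := by
  have hderiv := hu.eval_derivative_ne_zero
  rw [← R.map_red_belyiPoly] at hderiv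
  have hring : R.integralRoot u = R.integralRoot v := eq_of_map_eq_of_derivative_ne_zero R.red
    (R.eval_integralRoot u) (R.eval_integralRoot v) huv hderiv
  exact Subtype.ext (congrArg (fun a : R.ring => (a : L)) hring)

variable [IsSplittingField K L (belyiPoly w)]

theorem exists_redRoot_eq_of_dvd {P : R.ring[X]}
    (hP : P.map R.ring.subtype ∣ belyiPoly (algebraMap K L w)) (hne : P.map R.red ≠ 0)
    {y : AlgebraicClosure (ZMod p)} (hy : (P.map R.red).eval y = 0) :
    ∃ v, P.eval (R.integralRoot v) = 0 ∧ R.redRoot v = y := by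
  have hsplits : (belyiPoly (algebraMap K L w)).Splits := by
    rw [← map_belyiPoly]
    exact IsSplittingField.splits L (belyiPoly w)
  have hmem : ∀ u : L, (P.map R.ring.subtype).eval u = 0 → u ∈ (belyiPoly w).rootSet L :=
    fun u hu => mem_rootSet_belyiPoly_iff.2 (eval_eq_zero_of_dvd_of_eval_eq_zero hP hu)
  obtain ⟨a, ha, rfl⟩ := exists_root_map_eq (ι := R.ring.subtype) Subtype.val_injective R.red
    (hsplits.of_dvd (monic_belyiPoly _).ne_zero hP)
    (fun u hu => ⟨⟨u, R.coe_mem_ring ⟨u, hmem u (mem_roots'.1 hu).2⟩⟩, rfl⟩) hne hy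
  exact ⟨⟨a, hmem a (by rw [← R.ring.subtype_apply, eval_map_apply, ha, map_zero])⟩, ha, rfl⟩

theorem exists_redRoot_eq {y : AlgebraicClosure (ZMod p)}
    (hy : (belyiPoly (algebraMap _ (AlgebraicClosure (ZMod p)) w₀)).eval y = 0) :
    ∃ v, R.redRoot v = y := by
  rw [← R.map_red_belyiPoly] at hy
  exact (R.exists_redRoot_eq_of_dvd R.map_subtype_belyiPoly.dvd ((monic_belyiPoly _).map _).ne_zero
    hy).imp fun _ hv => hv.2

theorem exists_adj_redRoot_eq (hirr : Irreducible (belyiPoly w)) {v : (belyiPoly w).rootSet L}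
    (hv : incidence (R.redRoot v) (R.redRoot v) ≠ 0) {y : AlgebraicClosure (ZMod p)}
    (hy : incidence (R.redRoot v) y = 0) : ∃ u, (rootGraph L w).Adj v u ∧ R.redRoot u = y := by
  have hdvd : (incidence (C (R.integralRoot v)) X).map R.ring.subtype ∣
      belyiPoly (algebraMap K L w) := by
    rw [map_incidence_C_X]
    exact incidence_C_X_dvd_belyiPoly (mem_rootSet_belyiPoly_iff.1 v.2)
      (evalMap_gCoeffs_ne_zero hirr (aeval_eq_zero_of_mem_rootSet v.2))
  have heval : ∀ z, ((incidence (C (R.integralRoot v)) X).map R.red).eval z =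
      incidence (R.redRoot v) z := fun z => by
    rw [map_incidence_C_X, eval_incidence_C_X, redRoot]
  obtain ⟨u, hu, rfl⟩ := R.exists_redRoot_eq_of_dvd hdvd
    (fun h => hv (by rw [← heval, h, eval_zero])) ((heval y).trans hy)
  refine ⟨u, ⟨fun h => hv ?_, ?_⟩, rfl⟩
  · rwa [← Subtype.ext h] at hy
  · rw [eval_incidence_C_X] at hu
    exact (map_incidence R.ring.subtype _ _).symm.trans (congrArg R.ring.subtype hu)

end FrobeniusReduction

end Reduction

section ArcLifting

variable {K L : Type*} [Field K] [Field L] [Algebra K L] {p : ℕ} [Fact p.Prime] {w : K}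
  {w₀ : ZMod p}

theorem IsGoodPoint.pow {y : AlgebraicClosure (ZMod p)} (hy : IsGoodPoint w₀ y) :
    IsGoodPoint w₀ (y ^ p) := by
  let φ := frobenius (AlgebraicClosure (ZMod p)) p
  have hφ : Function.Injective φ := frobenius_inj _ p
  have hw₀ : φ (algebraMap _ _ w₀) = algebraMap _ _ w₀ := by
    rw [← RingHom.map_frobenius, ZMod.frobenius_zmod, RingHom.id_apply]
  have hpoly := map_belyiPoly φ (algebraMap _ (AlgebraicClosure (ZMod p)) w₀)
  rw [hw₀] at hpoly
  refine ⟨?_, ?_, ?_⟩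
  · rw [← frobenius_def, ← hpoly, eval_map_apply, hy.eval_eq_zero, map_zero]
  · rw [← frobenius_def, ← hpoly, derivative_map, eval_map_apply, map_ne_zero_iff φ hφ]
    exact hy.eval_derivative_ne_zero
  · rw [← frobenius_def, ← map_incidence, map_ne_zero_iff φ hφ]
    exact hy.incidence_self_ne_zero

namespace FrobeniusReduction

variable (R : FrobeniusReduction K L w p w₀)

theorem redRoot_ne_and_not_adj {u v : (belyiPoly w).rootSet L} (hne : R.redRoot v ≠ R.redRoot u)
    (hadj : ¬ (incidenceGraph _).Adj (R.redRoot u) (R.redRoot v)) :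
    v ≠ u ∧ ¬ (rootGraph L w).Adj u v :=
  ⟨fun h => hne (congrArg _ h), fun h => hadj ⟨hne.symm, R.incidence_redRoot h.2⟩⟩

theorem frob_smul_eq_self {v : (belyiPoly w).rootSet L} (hv : IsGoodPoint w₀ (R.redRoot v))
    (hpow : R.redRoot v ^ p = R.redRoot v) : R.frob • v = v :=
  (R.eq_of_redRoot_eq hv ((R.redRoot_frob_smul v).trans hpow).symm).symm

theorem map_frob_smul_eq_self {l : List ((belyiPoly w).rootSet L)}
    (hgood : ∀ y ∈ l.map R.redRoot, IsGoodPoint w₀ y ∧ y ^ p = y) : l.map (R.frob • ·) = l :=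
  (List.map_congr_left fun _ hv =>
    have hv := hgood _ (List.mem_map_of_mem hv)
    R.frob_smul_eq_self hv.1 hv.2).trans (List.map_id l)

variable [IsSplittingField K L (belyiPoly w)]

theorem adj_of_redRoot_adj (hirr : Irreducible (belyiPoly w))
    {u v : (belyiPoly w).rootSet L} (hu : IsGoodPoint w₀ (R.redRoot u))
    (hv : IsGoodPoint w₀ (R.redRoot v))
    (hadj : (incidenceGraph _).Adj (R.redRoot u) (R.redRoot v)) :
    (rootGraph L w).Adj u v := by
  obtain ⟨v', hv', heq⟩ := R.exists_adj_redRoot_eq hirr hu.incidence_self_ne_zero hadj.2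
  rwa [R.eq_of_redRoot_eq hv heq.symm]

theorem exists_mem_extensions (hirr : Irreducible (belyiPoly w))
    {l : List ((belyiPoly w).rootSet L)} {y : AlgebraicClosure (ZMod p)}
    (hroot : (belyiPoly (algebraMap _ (AlgebraicClosure (ZMod p)) w₀)).eval y = 0)
    (hgood : ∀ x ∈ l.map R.redRoot, IsGoodPoint w₀ x)
    (hy : y ∈ extensions (incidenceGraph _) (l.map R.redRoot)) :
    ∃ v ∈ extensions (rootGraph L w) l, R.redRoot v = y := by
  rcases l with - | ⟨u, l⟩
  · exact (R.exists_redRoot_eq hroot).imp fun v hv => ⟨trivial, hv⟩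
  obtain ⟨v, huv, rfl⟩ := R.exists_adj_redRoot_eq hirr
    (hgood _ (List.mem_cons_self ..)).incidence_self_ne_zero (adj_of_mem_extensions hy).2
  refine ⟨v, ?_, rfl⟩
  rcases l with - | ⟨u', l⟩
  · exact huv
  · exact ⟨huv, R.redRoot_ne_and_not_adj hy.2.1 hy.2.2⟩

theorem exists_isArc (hirr : Irreducible (belyiPoly w)) {ys : List (AlgebraicClosure (ZMod p))}
    (hgood : ∀ y ∈ ys, IsGoodPoint w₀ y) (hys : IsArc (incidenceGraph _) ys) :
    ∃ l, IsArc (rootGraph L w) l ∧ l.map R.redRoot = ys := by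
  induction ys with
  | nil => exact ⟨[], trivial, rfl⟩
  | cons y ys ih =>
    rw [List.forall_mem_cons] at hgood
    obtain ⟨l, hl, rfl⟩ := ih hgood.2 hys.2
    obtain ⟨v, hv, rfl⟩ := R.exists_mem_extensions hirr hgood.1.eval_eq_zero hgood.2 hys.1
    exact ⟨v :: l, ⟨hv, hl⟩, rfl⟩

theorem exists_hasSwap (R : FrobeniusReduction K L w p w₀)
    (hirr : Irreducible (belyiPoly w)) {ys : List (AlgebraicClosure (ZMod p))}
    (hgood : ∀ y ∈ ys, IsGoodPoint w₀ y ∧ y ^ p = y) (hys : IsArc (incidenceGraph _) ys)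
    {d : AlgebraicClosure (ZMod p)} (hd : IsGoodPoint w₀ d)
    (hmem : d ∈ extensions (incidenceGraph _) ys) (hadj : (incidenceGraph _).Adj d (d ^ p)) :
    ∃ l, l.length = ys.length ∧ HasSwap (L ≃ₐ[K] L) (rootGraph L w) l := by
  obtain ⟨l, hl, rfl⟩ := R.exists_isArc hirr (fun y hy => (hgood y hy).1) hys
  obtain ⟨v, hv, rfl⟩ :=
    R.exists_mem_extensions hirr hd.eval_eq_zero (fun y hy => (hgood y hy).1) hmem
  refine ⟨l, (List.length_map _).symm, hl, R.frob, R.map_frob_smul_eq_self hgood, v, hv, ?_⟩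
  refine R.adj_of_redRoot_adj hirr hd ?_ ?_ <;> rw [R.redRoot_frob_smul]
  exacts [hd.pow, hadj]

theorem exists_hasJump (R : FrobeniusReduction K L w p w₀)
    (hirr : Irreducible (belyiPoly w)) {ys : List (AlgebraicClosure (ZMod p))}
    (hgood : ∀ y ∈ ys, IsGoodPoint w₀ y ∧ y ^ p = y) (hys : IsArc (incidenceGraph _) ys)
    {e : AlgebraicClosure (ZMod p)}
    (hroot : (belyiPoly (algebraMap _ (AlgebraicClosure (ZMod p)) w₀)).eval e = 0)
    (hmem : e ∈ extensions (incidenceGraph _) ys) (hne : e ^ p ≠ e)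
    (hadj : ¬ (incidenceGraph _).Adj e (e ^ p)) :
    ∃ l, l.length = ys.length ∧ HasJump (L ≃ₐ[K] L) (rootGraph L w) 2 l := by
  obtain ⟨l, hl, rfl⟩ := R.exists_isArc hirr (fun y hy => (hgood y hy).1) hys
  obtain ⟨v, hv, rfl⟩ := R.exists_mem_extensions hirr hroot (fun y hy => (hgood y hy).1) hmem
  refine ⟨l, (List.length_map _).symm, hl, R.frob, R.map_frob_smul_eq_self hgood, v, hv, ?_⟩
  intro m hm hm'
  obtain rfl : m = 1 := by lia
  rw [← R.redRoot_frob_smul] at hne hadj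
  rw [pow_one]
  exact R.redRoot_ne_and_not_adj hne hadj

end FrobeniusReduction

end ArcLifting

section Points

open CoeffList

/-- The formal derivative of a coefficient list. -/
def CoeffList.derivative {α : Type*} [Zero α] [Add α] : CoeffList α → CoeffList α
  | [] => 0
  | _ :: l => l + (0 :: derivative l)

theorem derivative_evalMap_X {S : Type*} [CommRing S] : ∀ l : CoeffList ℤ,
    derivative (evalMap Int.cast (X : S[X]) l) = evalMap Int.cast X (CoeffList.derivative l)
  | [] => derivative_zero
  | a :: l => by
    rw [evalMap_cons, CoeffList.derivative, evalMap_add isArithHom_intCast, evalMap_cons,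
      derivative_add, derivative_mul, derivative_X, derivative_evalMap_X l, derivative_intCast,
      Int.cast_zero]
    ring

variable {S : Type*} [CommRing S]

/-- The value of `q + w r` at `x`, in a form suitable for evaluation. -/
def belyiValue (w x : S) : S :=
  evalMap Int.cast x qCoeffs - 136048896 * w * evalMap Int.cast x gCoeffs

/-- The value of the derivative of `q + w r` at `x`, in a form suitable for evaluation. -/
def belyiSlope (w x : S) : S :=
  evalMap Int.cast x (CoeffList.derivative qCoeffs) -
    136048896 * w * evalMap Int.cast x (CoeffList.derivative gCoeffs)

theorem eval_derivative_belyiPoly (w x : S) :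
    (derivative (belyiPoly w)).eval x = belyiSlope w x := by
  rw [belyiPoly, derivative_sub, derivative_C_mul, derivative_evalMap_X, derivative_evalMap_X,
    eval_sub, eval_mul, eval_C, eval_evalMap_X, eval_evalMap_X, belyiSlope]

variable {p : ℕ} [Fact p.Prime]

theorem isGoodPoint_map_iff (φ : S →+* AlgebraicClosure (ZMod p)) {w : ℤ} {x : S} :
    IsGoodPoint w (φ x) ↔
      φ (belyiValue w x) = 0 ∧ φ (belyiSlope w x) ≠ 0 ∧ φ (incidence x x) ≠ 0 := by
  have hvalue : (belyiPoly (algebraMap (ZMod p) (AlgebraicClosure (ZMod p)) w)).eval (φ x) =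
      φ (belyiValue w x) := by
    simp only [eval_belyiPoly, belyiValue, map_sub, map_mul, map_evalMap_intCast, map_intCast,
      map_ofNat]
  have hslope :
      (derivative (belyiPoly (algebraMap (ZMod p) (AlgebraicClosure (ZMod p)) w))).eval (φ x) =
        φ (belyiSlope w x) := by
    simp only [eval_derivative_belyiPoly, belyiSlope, map_sub, map_mul, map_evalMap_intCast,
      map_intCast, map_ofNat]
  exact ⟨fun h => ⟨hvalue.symm.trans h.1, hslope ▸ h.2, map_incidence φ x x ▸ h.3⟩,
    fun h => ⟨hvalue.trans h.1, hslope ▸ h.2.1, map_incidence φ x x ▸ h.2.2⟩⟩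

theorem isGoodPoint_intCast_iff {w x : ℤ} :
    IsGoodPoint (w : ZMod p) (x : AlgebraicClosure (ZMod p)) ↔
      (p : ℤ) ∣ belyiValue w x ∧ ¬ (p : ℤ) ∣ belyiSlope w x ∧ ¬ (p : ℤ) ∣ incidence x x := by
  simpa only [Int.coe_castRingHom, CharP.intCast_eq_zero_iff _ p, ne_eq, Int.cast_id] using
    isGoodPoint_map_iff (Int.castRingHom (AlgebraicClosure (ZMod p))) (w := w) (x := x)

end Points

section Gaussian

variable {p : ℕ} [Fact p.Prime] (φ : GaussianInt →+* AlgebraicClosure (ZMod p))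

theorem nonempty_gaussianInt_ringHom :
    Nonempty (GaussianInt →+* AlgebraicClosure (ZMod p)) := by
  obtain ⟨i, hi⟩ := IsAlgClosed.exists_pow_nat_eq (-1 : AlgebraicClosure (ZMod p)) two_pos
  exact ⟨Zsqrtd.lift ⟨i, by rw [← sq, hi, Int.cast_neg, Int.cast_one]⟩⟩

theorem pow_gaussianInt_apply (hp : p % 4 = 3) (z : GaussianInt) : φ z ^ p = φ (star z) := by
  have hsq : φ Zsqrtd.sqrtd ^ 2 = -1 := by
    rw [← map_pow, sq, Zsqrtd.dmuld, map_intCast, Int.cast_neg, Int.cast_one]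
  have hhom : (frobenius _ p).comp φ = φ.comp (starRingEnd GaussianInt) := by
    refine Zsqrtd.hom_ext _ _ ?_
    obtain ⟨k, hk⟩ : ∃ k, p = 2 * (2 * k + 1) + 1 := ⟨p / 4, by lia⟩
    calc φ Zsqrtd.sqrtd ^ p = φ Zsqrtd.sqrtd ^ (2 * (2 * k + 1) + 1) :=
          congrArg (φ Zsqrtd.sqrtd ^ ·) hk
      _ = -φ Zsqrtd.sqrtd := by
          rw [pow_succ, pow_mul, hsq, Odd.neg_one_pow ⟨k, rfl⟩, neg_one_mul]
      _ = φ (star Zsqrtd.sqrtd) := (map_neg φ _).symm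
  exact congrArg (fun ψ : GaussianInt →+* _ => ψ z) hhom

theorem gaussianInt_apply_eq_zero_iff (hp : p % 4 = 3) {z : GaussianInt} :
    φ z = 0 ↔ (p : ℤ) ∣ z.norm := by
  have hnorm : (z.norm : AlgebraicClosure (ZMod p)) = φ z * φ z ^ p := by
    rw [pow_gaussianInt_apply φ hp, ← map_mul, ← Zsqrtd.norm_eq_mul_conj, map_intCast]
  rw [← CharP.intCast_eq_zero_iff (AlgebraicClosure (ZMod p)) p, hnorm, ← pow_succ',
    pow_eq_zero_iff (Nat.succ_ne_zero p)]

theorem gaussianInt_apply_eq_iff (hp : p % 4 = 3) {x y : GaussianInt} :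
    φ x = φ y ↔ (p : ℤ) ∣ (x - y).norm := by
  rw [← gaussianInt_apply_eq_zero_iff φ hp, map_sub, sub_eq_zero]

theorem incidenceGraph_adj_gaussianInt_iff (hp : p % 4 = 3) {x y : GaussianInt} :
    (incidenceGraph _).Adj (φ x) (φ y) ↔
      ¬ (p : ℤ) ∣ (x - y).norm ∧ (p : ℤ) ∣ (incidence x y).norm := by
  rw [← gaussianInt_apply_eq_iff φ hp, ← gaussianInt_apply_eq_zero_iff φ hp, map_incidence]
  rfl

theorem isGoodPoint_gaussianInt_iff (hp : p % 4 = 3) {w : ℤ} {x : GaussianInt} :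
    IsGoodPoint w (φ x) ↔ (p : ℤ) ∣ (belyiValue (w : GaussianInt) x).norm ∧
      ¬ (p : ℤ) ∣ (belyiSlope (w : GaussianInt) x).norm ∧ ¬ (p : ℤ) ∣ (incidence x x).norm := by
  simp only [isGoodPoint_map_iff, ← gaussianInt_apply_eq_zero_iff φ hp, ne_eq]

end Gaussian

section GaussianPoints

variable {K L : Type*} [Field K] [Field L] [Algebra K L] {w : K}
  [IsSplittingField K L (belyiPoly w)]

instance : Fact (Nat.Prime 43) := ⟨by norm_num⟩

instance : Fact (Nat.Prime 107) := ⟨by norm_num⟩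

theorem exists_hasSwap_of_reduction (R : FrobeniusReduction K L w 43 (23 : ℤ))
    (hirr : Irreducible (belyiPoly w)) :
    ∃ l, l.length = 3 ∧ HasSwap (L ≃ₐ[K] L) (rootGraph L w) l := by
  obtain ⟨φ⟩ := nonempty_gaussianInt_ringHom (p := 43)
  have hp : 43 % 4 = 3 := rfl
  refine R.exists_hasSwap hirr (ys := [φ 32, φ 16, φ 15]) (d := φ ⟨-2, 1⟩) ?_ ?_ ?_ ?_ ?_
  · simp only [List.forall_mem_cons, List.not_mem_nil, IsEmpty.forall_iff, implies_true,
      isGoodPoint_gaussianInt_iff φ hp, pow_gaussianInt_apply φ hp, gaussianInt_apply_eq_iff φ hp]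
    decide +kernel
  · simp only [IsArc, extensions, Set.mem_ofPred_eq, Set.mem_univ, ne_eq,
      incidenceGraph_adj_gaussianInt_iff φ hp, gaussianInt_apply_eq_iff φ hp]
    decide +kernel
  · rw [isGoodPoint_gaussianInt_iff φ hp]
    decide +kernel
  · simp only [extensions, Set.mem_ofPred_eq, ne_eq,
      incidenceGraph_adj_gaussianInt_iff φ hp, gaussianInt_apply_eq_iff φ hp]
    decide +kernel
  · rw [pow_gaussianInt_apply φ hp, incidenceGraph_adj_gaussianInt_iff φ hp]
    decide +kernel

theorem exists_hasJump_of_reduction (R : FrobeniusReduction K L w 107 (53 : ℤ))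
    (hirr : Irreducible (belyiPoly w)) :
    ∃ l, l.length = 4 ∧ HasJump (L ≃ₐ[K] L) (rootGraph L w) 2 l := by
  obtain ⟨φ⟩ := nonempty_gaussianInt_ringHom (p := 107)
  have hp : 107 % 4 = 3 := rfl
  have he : IsGoodPoint (53 : ℤ) (φ ⟨37, 2⟩) := by
    rw [isGoodPoint_gaussianInt_iff φ hp]
    decide +kernel
  refine R.exists_hasJump hirr (ys := [φ 10, φ 47, φ 65, φ 0]) ?_ ?_ he.eval_eq_zero ?_ ?_ ?_
  · simp only [List.forall_mem_cons, List.not_mem_nil, IsEmpty.forall_iff, implies_true,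
      isGoodPoint_gaussianInt_iff φ hp, pow_gaussianInt_apply φ hp, gaussianInt_apply_eq_iff φ hp]
    decide +kernel
  · simp only [IsArc, extensions, Set.mem_ofPred_eq, Set.mem_univ, ne_eq,
      incidenceGraph_adj_gaussianInt_iff φ hp, gaussianInt_apply_eq_iff φ hp]
    decide +kernel
  · simp only [extensions, Set.mem_ofPred_eq, ne_eq,
      incidenceGraph_adj_gaussianInt_iff φ hp, gaussianInt_apply_eq_iff φ hp]
    decide +kernel
  · rw [pow_gaussianInt_apply φ hp, Ne, gaussianInt_apply_eq_iff φ hp]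
    decide +kernel
  · rw [pow_gaussianInt_apply φ hp, incidenceGraph_adj_gaussianInt_iff φ hp]
    decide +kernel

end GaussianPoints

section CubicPoint

open CoeffList

theorem IsTriangular.sq_smul_eq_of_adj_smul {V G : Type*} [Group G] [MulAction G V]
    {Γ : SimpleGraph V} (hΓ : IsTriangular Γ) (hG : ActsOn G Γ) {g : G} {b e : V}
    (hb : g • b = b) (hbe : Γ.Adj b e) (he : Γ.Adj e (g • e)) : g ^ 2 • e = e := by
  have hbge : Γ.Adj b (g • e) := by rwa [← hb, hG]
  have hbgge : Γ.Adj b (g ^ 2 • e) := by rwa [sq, mul_smul, ← hb, hG]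
  refine (hΓ hbge).unique ⟨hbgge, ?_⟩ ⟨hbe, he.symm⟩
  rwa [sq, mul_smul, hG]

theorem IsTriangular.hasJump_three {V G : Type*} [Group G] [MulAction G V]
    {Γ : SimpleGraph V} (hΓ : IsTriangular Γ) (hG : ActsOn G Γ) {g : G} {b e : V}
    (hb : g • b = b) (hbe : Γ.Adj b e) (hne : ∀ k, ¬ 3 ∣ k → g ^ k • e ≠ e) :
    HasJump G Γ 3 [b] := by
  have hpow : ∀ m, g ^ m • b = b := (MulAction.stabilizer G b).pow_mem hb
  refine ⟨⟨trivial, trivial⟩, g, by rw [List.map_singleton, hb], e, hbe, fun m hm hm3 => ?_⟩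
  have hdvd : ¬ 3 ∣ m := by lia
  refine ⟨hne m hdvd, fun hadj => hne (m * 2) (by lia) ?_⟩
  rw [pow_mul]
  exact hΓ.sq_smul_eq_of_adj_smul hG (hpow m) hbe hadj

theorem pow_card_pow_ne_of_irreducible {k E : Type*} [Field k] [Field E] [Algebra k E] {f : k[X]}
    (hf : Irreducible f) {z : E} (hz : aeval z f = 0) {n : ℕ} (hn : ¬ f.natDegree ∣ n) :
    z ^ Nat.card k ^ n ≠ z := fun hzn =>
  hn <| hf.natDegree_dvd_of_dvd_X_pow_card_pow_sub_X <| (hf.dvd_iff_aeval_eq_zero hz).1 <| by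
    rw [map_sub, map_pow, aeval_X, hzn, sub_self]

variable {K L : Type*} [Field K] [Field L] [Algebra K L] {w : K}

theorem FrobeniusReduction.redRoot_frob_pow_smul {p : ℕ} [Fact p.Prime] {w₀ : ZMod p}
    (R : FrobeniusReduction K L w p w₀) (v : (belyiPoly w).rootSet L) (k : ℕ) :
    R.redRoot (R.frob ^ k • v) = R.redRoot v ^ p ^ k := by
  induction k with
  | zero => rw [pow_zero, one_smul, pow_zero, pow_one]
  | succ k ih => rw [pow_succ', mul_smul, R.redRoot_frob_smul, ih, ← pow_mul, pow_succ]

instance : Fact (Nat.Prime 11) := ⟨by norm_num⟩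

/-- An irreducible factor modulo `11` of `A(0, y)`. -/
noncomputable def cubicFactor : (ZMod 11)[X] := X ^ 3 + 3 * X ^ 2 + 2 * X + 3

theorem natDegree_cubicFactor : cubicFactor.natDegree = 3 := by
  rw [cubicFactor]
  compute_degree!

theorem irreducible_cubicFactor : Irreducible cubicFactor := by
  refine irreducible_of_degree_le_three_of_not_isRoot (by rw [natDegree_cubicFactor]; decide) ?_
  simp only [cubicFactor, IsRoot.def, eval_add, eval_mul, eval_pow, eval_X, eval_ofNat]
  decide

theorem incidence_zero_eq_zero_of_aeval_cubicFactor {z : AlgebraicClosure (ZMod 11)}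
    (hz : aeval z cubicFactor = 0) : incidence 0 z = 0 := by
  have hchar : (11 : AlgebraicClosure (ZMod 11)) = 0 := CharP.cast_eq_zero _ 11
  have hz : z ^ 3 + 3 * z ^ 2 + 2 * z + 3 = 0 := by
    simpa only [cubicFactor, map_add, map_mul, map_pow, aeval_X, map_ofNat] using hz
  have hA : incidence 0 z = 69 + 12 * z - 109 * z ^ 2 + 34 * z ^ 3 + 33 * z ^ 4 + 10 * z ^ 5 -
      z ^ 6 := by
    simp only [incidence, evalPair, incidenceCoeffs, evalMap_cons, evalMap_nil]
    push_cast
    ring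
  rw [hA]
  linear_combination (1 + 7 * z + 2 * z ^ 2 + 10 * z ^ 3) * hz +
    (6 - z - 12 * z ^ 2 - 2 * z ^ 3 - 2 * z ^ 5 - z ^ 6) * hchar

theorem exists_hasJump_three_of_reduction [IsSplittingField K L (belyiPoly w)]
    (R : FrobeniusReduction K L w 11 (5 : ℤ)) (hirr : Irreducible (belyiPoly w))
    (hΓ : IsTriangular (rootGraph L w)) : ∃ b, HasJump (L ≃ₐ[K] L) (rootGraph L w) 3 [b] := by
  have hgood : IsGoodPoint (5 : ℤ) (0 : AlgebraicClosure (ZMod 11)) := by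
    rw [← Int.cast_zero, isGoodPoint_intCast_iff]
    decide +kernel
  obtain ⟨b, hb⟩ := R.exists_redRoot_eq hgood.eval_eq_zero
  have hb_good : IsGoodPoint (5 : ℤ) (R.redRoot b) := by rwa [hb]
  obtain ⟨z, hz⟩ := IsAlgClosed.exists_aeval_eq_zero (AlgebraicClosure (ZMod 11)) cubicFactor
    irreducible_cubicFactor.degree_pos.ne'
  obtain ⟨e, hbe, rfl⟩ := R.exists_adj_redRoot_eq hirr hb_good.incidence_self_ne_zero
    (by rw [hb, incidence_zero_eq_zero_of_aeval_cubicFactor hz])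
  refine ⟨b, hΓ.hasJump_three (actsOn_rootGraph w) (g := R.frob) ?_ hbe fun k hk he => ?_⟩
  · exact R.frob_smul_eq_self hb_good (by rw [hb, zero_pow (by decide)])
  · refine pow_card_pow_ne_of_irreducible irreducible_cubicFactor hz
      (natDegree_cubicFactor.symm ▸ hk) ?_
    rw [Nat.card_zmod, ← R.redRoot_frob_pow_smul, he]

end CubicPoint

section Labelling

open CoeffList

instance : Fact (Nat.Prime 10009) := ⟨by norm_num⟩

/-- The roots of `q + 4504 r` modulo `10009`, numbered like the points of the hexagon. -/
def splitRoots : List ℤ :=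
  [35, 7952, 8638, 5602, 6606, 6403, 3060, 6963, 6974, 6964, 1280, 8565, 3058, 7491, 6350, 229,
   6957, 6612, 4965, 3700, 7526, 3297, 5747, 5484, 1220, 8231, 1579, 7757, 1159, 1654, 9265,
   3528, 6011, 6246, 5208, 621, 1285, 5676, 1880, 3644, 7347, 5640, 9301, 2488, 666, 6860, 1762,
   3824, 5351, 7544, 4012, 4483, 5014, 7366, 7565, 8456, 3922, 9519, 3816, 1608, 873, 1993, 5321]

/-- The root of `q + 4504 r` modulo `10009` that corresponds to a point of the hexagon. -/
def splitRoot (i : Fin 63) : ℤ := splitRoots.getD i 0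

theorem hexagon_adj_iff_dvd_incidence : ∀ i j,
    hexagon.Adj i j ↔ (10009 : ℤ) ∣ incidence (splitRoot i) (splitRoot j) := by
  decide +kernel

theorem eq_of_dvd_splitRoot_sub : ∀ i j, (10009 : ℤ) ∣ splitRoot i - splitRoot j → i = j := by
  decide +kernel

theorem dvd_belyiValue_splitRoot : ∀ i, (10009 : ℤ) ∣ belyiValue 4504 (splitRoot i) := by
  decide +kernel

theorem not_dvd_belyiSlope_splitRoot : ∀ i, ¬ (10009 : ℤ) ∣ belyiSlope 4504 (splitRoot i) := by
  decide +kernel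

theorem not_dvd_evalMap_gCoeffs_splitRoot : ∀ i,
    ¬ (10009 : ℤ) ∣ evalMap Int.cast (splitRoot i) gCoeffs := by
  decide +kernel

/-- The points of the hexagon, viewed as roots in characteristic `10009`. -/
noncomputable def splitPoint (i : Fin 63) : AlgebraicClosure (ZMod 10009) := (splitRoot i : ℤ)

theorem splitPoint_injective : Function.Injective splitPoint := fun i j hij => by
  refine eq_of_dvd_splitRoot_sub i j ?_
  exact (CharP.intCast_eq_zero_iff (AlgebraicClosure (ZMod 10009)) 10009 _).1
    ((Int.cast_sub _ _).trans (sub_eq_zero.2 hij))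

theorem hexagon_adj_iff_incidence_splitPoint {i j : Fin 63} :
    hexagon.Adj i j ↔ incidence (splitPoint i) (splitPoint j) = 0 := by
  have hcast := map_incidence (Int.castRingHom (AlgebraicClosure (ZMod 10009))) (splitRoot i)
    (splitRoot j)
  rw [Int.coe_castRingHom] at hcast
  rw [hexagon_adj_iff_dvd_incidence, splitPoint, splitPoint, ← hcast,
    CharP.intCast_eq_zero_iff _ 10009, Nat.cast_ofNat]

theorem isGoodPoint_splitPoint (i : Fin 63) : IsGoodPoint (4504 : ℤ) (splitPoint i) :=
  isGoodPoint_intCast_iff.2 ⟨dvd_belyiValue_splitRoot i, not_dvd_belyiSlope_splitRoot i,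
    fun h => hexagon.irrefl ((hexagon_adj_iff_dvd_incidence i i).2 h)⟩

theorem exists_splitPoint_eq {y : AlgebraicClosure (ZMod 10009)}
    (hy : (belyiPoly (algebraMap (ZMod 10009) _ (4504 : ℤ))).eval y = 0) :
    ∃ i, splitPoint i = y := by
  classical
  let P := belyiPoly (algebraMap (ZMod 10009) (AlgebraicClosure (ZMod 10009)) (4504 : ℤ))
  have hmem : ∀ {z}, z ∈ P.roots.toFinset ↔ P.eval z = 0 := by
    simp [P, (monic_belyiPoly _).ne_zero]
  have hsub : Finset.univ.image splitPoint ⊆ P.roots.toFinset := by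
    intro z hz
    obtain ⟨i, -, rfl⟩ := Finset.mem_image.1 hz
    exact hmem.2 (isGoodPoint_splitPoint i).eval_eq_zero
  have hcard : P.roots.toFinset.card ≤ (Finset.univ.image splitPoint).card := by
    rw [Finset.card_image_of_injective _ splitPoint_injective, Finset.card_univ, Fintype.card_fin,
      ← natDegree_belyiPoly (algebraMap (ZMod 10009) (AlgebraicClosure (ZMod 10009)) (4504 : ℤ))]
    exact (Multiset.toFinset_card_le _).trans P.card_roots'
  simpa [← Finset.eq_of_subset_of_card_le hsub hcard] using hmem.2 hy

variable {K L : Type*} [Field K] [Field L] [Algebra K L] {w : K}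
  [IsSplittingField K L (belyiPoly w)]

theorem nonempty_rootGraph_iso_hexagon (R : FrobeniusReduction K L w 10009 (4504 : ℤ))
    (hirr : Irreducible (belyiPoly w)) : Nonempty (rootGraph L w ≃g hexagon) := by
  choose root hroot using fun i => R.exists_redRoot_eq (isGoodPoint_splitPoint i).eval_eq_zero
  have hgood : ∀ i, IsGoodPoint (4504 : ℤ) (R.redRoot (root i)) := fun i =>
    (hroot i).symm ▸ isGoodPoint_splitPoint i
  have hinj : Function.Injective root := fun i j hij =>
    splitPoint_injective (by rw [← hroot, ← hroot, hij])
  have hsurj : Function.Surjective root := fun v => by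
    obtain ⟨i, hi⟩ := exists_splitPoint_eq (R.eval_redRoot v)
    exact ⟨i, R.eq_of_redRoot_eq (hgood i) ((hroot i).trans hi)⟩
  have hbij : Function.Bijective root := ⟨hinj, hsurj⟩
  refine ⟨RelIso.symm ⟨Equiv.ofBijective root hbij, fun {i j} => ?_⟩⟩
  rw [Equiv.ofBijective_apply, Equiv.ofBijective_apply, hexagon_adj_iff_incidence_splitPoint,
    ← hroot, ← hroot]
  refine ⟨fun h => R.incidence_redRoot h.2, fun h => R.adj_of_redRoot_adj hirr (hgood i) (hgood j)
    ⟨fun heq => (hgood i).incidence_self_ne_zero ?_, h⟩⟩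
  rwa [← heq] at h

end Labelling

section Irreducibility

open CoeffList

theorem evalMap_gCoeffs_ne_zero_of_evalMap_qCoeffs_eq_zero {y : AlgebraicClosure (ZMod 10009)}
    (hy : evalMap Int.cast y qCoeffs = 0) : evalMap Int.cast y gCoeffs ≠ 0 := by
  intro hg
  obtain ⟨i, rfl⟩ := exists_splitPoint_eq (by rw [eval_belyiPoly, hy, hg, mul_zero, sub_zero])
  refine not_dvd_evalMap_gCoeffs_splitRoot i
    ((CharP.intCast_eq_zero_iff (AlgebraicClosure (ZMod 10009)) 10009 _).1 ?_)
  rw [← eq_intCast (Int.castRingHom _), map_evalMap_intCast, eq_intCast]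
  exact hg

theorem isRelPrime_evalMap_gCoeffs_qCoeffs :
    IsRelPrime (C (-136048896) * evalMap Int.cast (X : ℤ[X]) gCoeffs)
      (evalMap Int.cast X qCoeffs) := by
  rintro d ⟨g', hg'⟩ ⟨q', hq'⟩
  have hlead : IsUnit d.leadingCoeff := IsUnit.of_mul_eq_one q'.leadingCoeff <| by
    rw [← leadingCoeff_mul, ← hq', monic_evalMap_X length_qCoeffs leadingCoeff_qCoeffs]
  let φ := Int.castRingHom (AlgebraicClosure (ZMod 10009))
  by_contra hd
  have hdeg : (d.map φ).degree ≠ 0 := by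
    rw [degree_map_eq_of_isUnit_leadingCoeff φ hlead]
    intro hzero
    rw [leadingCoeff, natDegree_eq_of_degree_eq_some hzero] at hlead
    exact hd (by rw [eq_C_of_degree_eq_zero hzero]; exact isUnit_C.2 hlead)
  obtain ⟨y, hy⟩ := IsAlgClosed.exists_root (d.map φ) hdeg
  have heval {f e : ℤ[X]} (hf : f = d * e) : (f.map φ).eval y = 0 := by
    rw [hf, Polynomial.map_mul, eval_mul, hy.eq_zero, zero_mul]
  have hq := heval hq'
  have hg := heval hg'
  rw [map_evalMap_X, eval_evalMap_X] at hq
  rw [Polynomial.map_mul, map_evalMap_X, eval_mul, eval_evalMap_X, map_C, eval_C] at hg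
  refine (mul_eq_zero.1 hg).elim (fun h => ?_)
    (evalMap_gCoeffs_ne_zero_of_evalMap_qCoeffs_eq_zero hq)
  rw [eq_intCast, CharP.intCast_eq_zero_iff _ 10009] at h
  norm_num at h

theorem swap_belyiPoly_X : Bivariate.swap (belyiPoly (X : ℤ[X])) =
    C (C (-136048896) * evalMap Int.cast X gCoeffs) * X + C (evalMap Int.cast X qCoeffs) := by
  have hswap (l : CoeffList ℤ) :
      Bivariate.swap (R := ℤ) (evalMap Int.cast X l) = C (evalMap Int.cast X l) := by
    have h := map_evalMap_intCast (Bivariate.swap (R := ℤ) : ℤ[X][X] →+* ℤ[X][X]) X l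
    rw [map_evalMap_intCast, ← Bivariate.swap_Y]
    exact h
  have hX : Bivariate.swap (R := ℤ) (C X) = X := Bivariate.swap_X
  rw [belyiPoly, map_sub, map_mul, hswap, hswap, map_mul C, map_mul, hX]
  simp only [map_ofNat, map_neg, map_mul]
  ring

theorem irreducible_belyiPoly_X : Irreducible (belyiPoly (X : ℤ[X])) := by
  rw [← MulEquiv.irreducible_iff (Bivariate.swap (R := ℤ)), swap_belyiPoly_X]
  refine irreducible_C_mul_X_add_C (mul_ne_zero ?_ ?_) isRelPrime_evalMap_gCoeffs_qCoeffs
  · exact C_ne_zero.2 (by norm_num)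
  · exact (monic_evalMap_X length_gCoeffs leadingCoeff_gCoeffs).ne_zero

theorem IsRatFuncGenerator.irreducible_belyiPoly {K : Type*} [Field K] {w : K}
    (hw : IsRatFuncGenerator w) : Irreducible (belyiPoly w) := by
  let _ := (aeval (R := ℤ) w).toAlgebra
  have := hw.isFractionRing
  have hgauss := (monic_belyiPoly (X : ℤ[X])).irreducible_iff_irreducible_map_fraction_map (K := K)
  have hX : algebraMap ℤ[X] K X = w := aeval_X w
  rw [map_belyiPoly, hX] at hgauss
  exact hgauss.1 irreducible_belyiPoly_X

end Irreducibility

section GaloisGroup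

variable {K L : Type*} [Field K] [Field L] [Algebra K L] {w : K}

theorem IsRatFuncGenerator.charZero (hw : IsRatFuncGenerator w) : CharZero K := by
  refine charZero_of_injective_algebraMap (R := ℤ) fun a b hab => C_injective ?_
  apply transcendental_iff_injective.1 hw.transcendental
  rw [aeval_C, aeval_C, hab]

theorem faithfulSMul_rootSet (P : K[X]) [IsSplittingField K L P] :
    FaithfulSMul (L ≃ₐ[K] L) (P.rootSet L) where
  eq_of_smul_eq_smul {σ τ} h := by
    have hadjoin := AlgHom.ext_of_adjoin_eq_top (IsSplittingField.adjoin_rootSet L P)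
      (φ₁ := (σ : L →ₐ[K] L)) (φ₂ := τ) fun x hx => congrArg Subtype.val (h ⟨x, hx⟩)
    exact AlgEquiv.ext fun x => AlgHom.congr_fun hadjoin x

theorem isPretransitive_rootSet [Normal K L] {P : K[X]} (hP : Irreducible P) :
    MulAction.IsPretransitive (L ≃ₐ[K] L) (P.rootSet L) where
  exists_smul_eq x y := by
    have hminpoly (z : P.rootSet L) :=
      minpoly.eq_of_irreducible hP (aeval_eq_zero_of_mem_rootSet z.2)
    have hconj : IsConjRoot K (y : L) x := (hminpoly y).symm.trans (hminpoly x)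
    obtain ⟨σ, hσ⟩ := hconj.exists_algEquiv
    exact ⟨σ, Subtype.ext hσ⟩

theorem isArcTransitive_one {G V : Type*} [Group G] [MulAction G V] [MulAction.IsPretransitive G V]
    (Γ : SimpleGraph V) : IsArcTransitive G Γ 1 := by
  intro l m _ _ hl hm
  obtain ⟨x, rfl⟩ := List.length_eq_one_iff.1 hl
  obtain ⟨y, rfl⟩ := List.length_eq_one_iff.1 hm
  exact (MulAction.exists_smul_eq G x y).imp fun g hg => congrArg ([·]) hg

theorem IsRatFuncGenerator.card_algEquiv [IsSplittingField K L (belyiPoly w)]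
    (hw : IsRatFuncGenerator w) : Nat.card (L ≃ₐ[K] L) = 12096 := by
  have hirr := hw.irreducible_belyiPoly
  have := hw.charZero
  have := IsSplittingField.finiteDimensional L (belyiPoly w)
  have := IsGalois.of_separable_splitting_field (E := L) hirr.separable
  have := faithfulSMul_rootSet (L := L) (belyiPoly w)
  have := isPretransitive_rootSet (L := L) hirr
  obtain ⟨R₁₁⟩ := hw.nonempty_frobeniusReduction (L := L) (p := 11) (5 : ℤ)
  obtain ⟨R₄₃⟩ := hw.nonempty_frobeniusReduction (L := L) (p := 43) (23 : ℤ)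
  obtain ⟨R₁₀₇⟩ := hw.nonempty_frobeniusReduction (L := L) (p := 107) (53 : ℤ)
  obtain ⟨R₁₀₀₀₉⟩ := hw.nonempty_frobeniusReduction (L := L) (p := 10009) (4504 : ℤ)
  obtain ⟨φ⟩ := nonempty_rootGraph_iso_hexagon R₁₀₀₀₉ hirr
  obtain ⟨b, hpoint⟩ :=
    exists_hasJump_three_of_reduction R₁₁ hirr (isTriangular_hexagon.of_iso φ)
  obtain ⟨l, hl, hswap⟩ := exists_hasSwap_of_reduction R₄₃ hirr
  obtain ⟨c, c₁, c₂, rfl⟩ := List.length_eq_three.1 hl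
  obtain ⟨m, hm, hjump⟩ := exists_hasJump_of_reduction R₁₀₇ hirr
  obtain ⟨d, d₁, d₂, d₃, rfl⟩ := List.length_eq_four.1 hm
  exact card_eq_of_iso_hexagon (actsOn_rootGraph w) φ (isArcTransitive_one _) hpoint hswap hjump

end GaloisGroup

section RationalFunctions

open CoeffList

theorem IsRatFuncGenerator.one_sub_ne_zero {K : Type*} [Field K] {t : K}
    (ht : IsRatFuncGenerator t) : 1 - t ≠ 0 := fun h =>
  ht.transcendental (sub_eq_zero.1 h ▸ isAlgebraic_one)

theorem IsRatFuncGenerator.inv_one_sub {K : Type*} [Field K] {t : K}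
    (ht : IsRatFuncGenerator t) : IsRatFuncGenerator (1 - t)⁻¹ := by
  have heq : 1 - (1 - t)⁻¹⁻¹ = t := by rw [inv_inv, sub_sub_cancel]
  refine ⟨fun halg => ht.transcendental ?_, ?_⟩
  · rw [← heq]
    exact isAlgebraic_one.sub halg.inv
  · have hmem : 1 - (1 - t)⁻¹⁻¹ ∈ Subfield.closure {(1 - t)⁻¹} :=
      sub_mem (one_mem _) (inv_mem (Subfield.subset_closure rfl))
    rw [heq] at hmem
    rw [← top_le_iff, ← ht.closure_eq_top]
    exact Subfield.closure_le.2 (Set.singleton_subset_iff.2 hmem)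

theorem transcendental_int_ratFunc_X {k : Type*} [Field k] [CharZero k] :
    Transcendental ℤ (RatFunc.X : RatFunc k) := by
  refine Transcendental.restrictScalars (S := k) Int.cast_injective ?_
  exact RatFunc.transcendental_X

theorem subfield_eq_top_of_ratFunc_X_mem {k : Type*} [Field k] (E : Subfield (RatFunc k))
    (hC : ∀ a, algebraMap k (RatFunc k) a ∈ E) (hX : RatFunc.X ∈ E) : E = ⊤ := by
  have hle : ⊤ ≤ E.toIntermediateField hC := by
    rw [← RatFunc.adjoin_X, IntermediateField.adjoin_simple_le_iff]
    exact hX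
  exact congrArg IntermediateField.toSubfield (top_le_iff.1 hle)

theorem isRatFuncGenerator_ratFunc_X : IsRatFuncGenerator (RatFunc.X : RatFunc ℚ) where
  transcendental := by
    convert transcendental_int_ratFunc_X (k := ℚ)
    exact Subsingleton.elim _ _
  closure_eq_top := subfield_eq_top_of_ratFunc_X_mem _
    (fun a => by rw [eq_ratCast]; exact SubfieldClass.ratCast_mem _ a) (Subfield.subset_closure rfl)

theorem q_eq_evalMap : q = evalMap Int.cast X qCoeffs := by
  rw [qCoeffs, q]
  simp only [evalMap_mul isArithHom_intCast, evalMap_pow isArithHom_intCast Int.cast_one,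
    evalMap_cons, evalMap_nil]
  push_cast
  ring

theorem r_eq_evalMap : r = -136048896 * evalMap Int.cast X gCoeffs := by
  rw [gCoeffs, r]
  simp only [evalMap_mul isArithHom_intCast, evalMap_pow isArithHom_intCast Int.cast_one,
    evalMap_cons, evalMap_nil]
  push_cast
  ring

theorem F_eq_C_mul_belyiPoly : F = C (1 - RatFunc.X) * belyiPoly (1 - RatFunc.X)⁻¹ := by
  have hinv : C (1 - RatFunc.X : RatFunc ℚ) * C (1 - RatFunc.X)⁻¹ = 1 := by
    rw [← C_mul, mul_inv_cancel₀ isRatFuncGenerator_ratFunc_X.one_sub_ne_zero, C_1]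
  simp only [F, p, q_eq_evalMap, r_eq_evalMap, belyiPoly, Polynomial.map_add, Polynomial.map_mul,
    Polynomial.map_neg, Polynomial.map_ofNat, map_evalMap_X, C_mul, map_ofNat]
  rw [C_sub, C_1] at hinv ⊢
  linear_combination 136048896 * evalMap Int.cast X gCoeffs * hinv

theorem isSplittingField_of_C_mul {K L : Type*} [Field K] [Field L] [Algebra K L] {a : K}
    (ha : a ≠ 0) (P : K[X]) [IsSplittingField K L (C a * P)] : IsSplittingField K L P where
  splits' := by
    have hP : P = C a⁻¹ * (C a * P) := by
      rw [← mul_assoc, ← C_mul, inv_mul_cancel₀ ha, C_1, one_mul]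
    rw [hP, Polynomial.map_mul, map_C]
    exact (Splits.C _).mul (IsSplittingField.splits L (C a * P))
  adjoin_rootSet' := by
    have h := IsSplittingField.adjoin_rootSet L (C a * P)
    rwa [rootSet, aroots_C_mul _ ha] at h

end RationalFunctions

section Conclusion

theorem natDegree_F : F.natDegree = 63 := by
  rw [F_eq_C_mul_belyiPoly, natDegree_C_mul isRatFuncGenerator_ratFunc_X.one_sub_ne_zero,
    natDegree_belyiPoly]

theorem irreducible_F : Irreducible F := by
  rw [F_eq_C_mul_belyiPoly, irreducible_isUnit_mul
    (isUnit_C.2 isRatFuncGenerator_ratFunc_X.one_sub_ne_zero.isUnit)]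
  exact isRatFuncGenerator_ratFunc_X.inv_one_sub.irreducible_belyiPoly

theorem card_gal_F : Nat.card F.Gal = 12096 := by
  have : IsSplittingField (RatFunc ℚ) F.SplittingField
      (C (1 - RatFunc.X) * belyiPoly (1 - RatFunc.X)⁻¹) :=
    F_eq_C_mul_belyiPoly ▸ IsSplittingField.splittingField F
  have := isSplittingField_of_C_mul (L := F.SplittingField)
    isRatFuncGenerator_ratFunc_X.one_sub_ne_zero (belyiPoly (1 - RatFunc.X)⁻¹)
  exact isRatFuncGenerator_ratFunc_X.inv_one_sub.card_algEquiv

end Conclusion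

end BelyiHexagon

theorem belyi_deg63_stmt15 :
    F.natDegree = 63 ∧ Irreducible F ∧ Nat.card F.Gal = 12096 :=
  ⟨BelyiHexagon.natDegree_F, BelyiHexagon.irreducible_F, BelyiHexagon.card_gal_F⟩
end
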